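/- arXiv:1806.00939 — 11 statements merged into one kernel-verified Lean document; each statement's English description precedes it below -/
import Mathlib

section
/- Let F be a field, M, K, N, d positive integers, and p a multivariate polynomial in M variables over F of total degree at most d. Let β_1, …, β_K ∈ F be pairwise distinct and α_1, …, α_N ∈ F be pairwise distinct. For a dataset X = (X_1, …, X_K) ∈ (F^M)^K, let u_X : F → F^M be the unique coordinatewise polynomial map of degree at most K−1 satisfying u_X(β_j) = X_j for all j ∈ {1,…,K}. Then for every subset 𝒦 ⊆ {1,…,N} with |𝒦| ≥ (K−1)d + 1 and any two datasets X, X′ ∈ (F^M)^K such that p(u_X(α_i)) = p(u_{X′}(α_i)) for all i ∈ 𝒦, one has p(X_j) = p(X′_j) for every j ∈ {1,…,K}. (Hence the Lagrange Coded Computing scheme is S-resilient whenever (K−1)d + S + 1 ≤ N.) -/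
/-- **S-resiliency of Lagrange Coded Computing.**
Let `p` be a multivariate polynomial in `M` variables of total degree at most `d`,
`β_1,…,β_K` pairwise distinct interpolation nodes and `α_1,…,α_N` pairwise distinct
evaluation points.  For a dataset `X`, the Lagrange encoding polynomial `u_X` is the
unique coordinatewise polynomial of degree `≤ K-1` with `u_X (β j) = X j`
(realized by `Lagrange.interpolate`).  If two datasets produce the same worker results
`p (u_X (α i))` on a set of at least `(K-1)d + 1` workers, then all desired outputs
`p (X j)` coincide. -/
theorem lcc_resiliency (F : Type*) [Field F] (M K N d : ℕ)
    (hM : 0 < M) (hK : 0 < K) (hN : 0 < N) (hd : 0 < d)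
    (p : MvPolynomial (Fin M) F) (hp : p.totalDegree ≤ d)
    (β : Fin K → F) (hβ : Function.Injective β)
    (α : Fin N → F) (hα : Function.Injective α)
    (𝒦 : Finset (Fin N)) (h𝒦 : (K - 1) * d + 1 ≤ 𝒦.card)
    (X X' : Fin K → Fin M → F)
    (hagree : ∀ i ∈ 𝒦,
      MvPolynomial.eval
          (fun m => (Lagrange.interpolate Finset.univ β (fun j => X j m)).eval (α i)) p =
        MvPolynomial.eval
          (fun m => (Lagrange.interpolate Finset.univ β (fun j => X' j m)).eval (α i)) p) :
    ∀ j : Fin K, MvPolynomial.eval (X j) p = MvPolynomial.eval (X' j) p := by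
  have hdeg : ∀ Y : Fin K → Fin M → F, (MvPolynomial.aeval (fun m =>
      Lagrange.interpolate Finset.univ β (fun j => Y j m)) p : Polynomial F).degree
        < 𝒦.card := by
    intro Y
    have h1 : (MvPolynomial.aeval (fun m =>
      Lagrange.interpolate Finset.univ β (fun j => Y j m)) p : Polynomial F).natDegree
        ≤ d * (K - 1) := by
      apply MvPolynomial.aeval_natDegree_le p hp
      intro m
      apply Polynomial.natDegree_le_of_degree_le
      have := Lagrange.degree_interpolate_le (s := Finset.univ) (fun j => Y j m)
        (hβ.injOn)
      simpa using this
    refine lt_of_le_of_lt (Polynomial.degree_le_of_natDegree_le h1) ?_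
    rw [mul_comm]
    exact_mod_cast h𝒦
  have hev : ∀ (Y : Fin K → Fin M → F) (x : F), (MvPolynomial.aeval (fun m =>
      Lagrange.interpolate Finset.univ β (fun j => Y j m)) p : Polynomial F).eval x =
      MvPolynomial.eval
        (fun m => (Lagrange.interpolate Finset.univ β (fun j => Y j m)).eval x) p := by
    intro Y x
    rw [← Polynomial.coe_evalRingHom, MvPolynomial.aeval_def, MvPolynomial.hom_eval₂,
      MvPolynomial.eval, MvPolynomial.coe_eval₂Hom]
    congr 1
    ext a
    simp
  have heq := Polynomial.eq_of_degrees_lt_of_eval_index_eq 𝒦 (v := α) hα.injOn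
    (hdeg X) (hdeg X') (by intro i hi; rw [hev, hev]; exact hagree i hi)
  intro j
  have h := congrArg (Polynomial.eval (β j)) heq
  rw [hev, hev] at h
  simpa only [Lagrange.eval_interpolate_at_node _ hβ.injOn (Finset.mem_univ j)] using h
end

section
/- Let F be a field, K, T, N positive integers, β_1, …, β_{K+T} ∈ F pairwise distinct, and α_1, …, α_N ∈ F pairwise distinct with α_r ≠ β_t for all r ∈ {1,…,N} and t ∈ {1,…,K}. Then the T × N matrix U^bottom with entries U^bottom_{s,r} = ∏_{t ∈ {1,…,K+T} \ {K+s}} (α_r − β_t)/(β_{K+s} − β_t), for s ∈ {1,…,T} and r ∈ {1,…,N}, is an MDS matrix: every T × T submatrix of U^bottom is invertible. -/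
/-- **The bottom block of the LCC encoding matrix is MDS.**
With pairwise distinct `β_1,…,β_{K+T}`, pairwise distinct `α_1,…,α_N`, and
`α_r ≠ β_t` for all `r ∈ [N]`, `t ∈ [K]`, the `T × N` matrix with entries
`U^bottom_{s,r} = ∏_{t ≠ K+s} (α_r − β_t)/(β_{K+s} − β_t)` has every `T × T`
submatrix invertible. -/
theorem lcc_bottom_matrix_mds (F : Type*) [Field F] (K T N : ℕ)
    (hK : 0 < K) (hT : 0 < T) (hN : 0 < N)
    (β : Fin (K + T) → F) (hβ : Function.Injective β)
    (α : Fin N → F) (hα : Function.Injective α)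
    (hαβ : ∀ (r : Fin N) (t : Fin K), α r ≠ β (Fin.castAdd T t))
    (Ubot : Matrix (Fin T) (Fin N) F)
    (hU : ∀ s r, Ubot s r =
      ∏ t ∈ Finset.univ.erase (Fin.natAdd K s),
        (α r - β t) / (β (Fin.natAdd K s) - β t)) :
    ∀ σ : Fin T → Fin N, Function.Injective σ → IsUnit (Ubot.submatrix id σ) := by
  intro σ hσ
  rw [← Matrix.vecMul_injective_iff_isUnit]
  rw [← Matrix.coe_vecMulLinear, ← LinearMap.ker_eq_bot, LinearMap.ker_eq_bot']
  intro v hv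
  rw [Matrix.vecMulLinear_apply] at hv
  have hβ' : Set.InjOn β (Finset.univ : Finset (Fin (K + T))) := hβ.injOn
  let w : Fin (K + T) → F := Fin.addCases (fun _ => 0) v
  let P := Lagrange.interpolate Finset.univ β w
  have hnode : ∀ i, P.eval (β i) = w i := fun i =>
    Lagrange.eval_interpolate_at_node w hβ' (Finset.mem_univ i)
  have hPα : ∀ j, P.eval (α (σ j)) = 0 := by
    intro j
    have h := congrFun hv j
    simp only [Matrix.vecMul, dotProduct, Matrix.submatrix_apply, id, hU, Pi.zero_apply] at h
    rw [← h]
    simp only [P, Lagrange.interpolate_apply, Polynomial.eval_finsetSum, Fin.sum_univ_add, w,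
      Fin.addCases_left, Fin.addCases_right, Polynomial.eval_add, Polynomial.eval_mul, Polynomial.eval_C, zero_mul,
      Finset.sum_const_zero, zero_add]
    refine Finset.sum_congr rfl fun s _ => ?_
    rw [Lagrange.basis, Polynomial.eval_prod]
    congr 1
    refine Finset.prod_congr rfl fun t _ => ?_
    simp [Lagrange.basisDivisor, div_eq_mul_inv, mul_comm]
  let x : Fin (K + T) → F := Fin.addCases (fun t => β (Fin.castAdd T t)) (fun j => α (σ j))
  have hx : Function.Injective x := by
    intro a b
    refine Fin.addCases (fun a => ?_) (fun a => ?_) a <;>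
    refine Fin.addCases (fun b => ?_) (fun b => ?_) b <;>
    simp only [x, Fin.addCases_left, Fin.addCases_right] <;> intro h
    · exact hβ h
    · exact absurd h.symm (hαβ _ _)
    · exact absurd h (hαβ _ _)
    · rw [hσ (hα h)]
  have hP : P = 0 := by
    refine Polynomial.eq_zero_of_degree_lt_of_eval_index_eq_zero Finset.univ (v := x) hx.injOn
      (Lagrange.degree_interpolate_lt w hβ') fun i _ => ?_
    refine Fin.addCases (fun a => ?_) (fun a => ?_) i
    · simp only [x, Fin.addCases_left]
      rw [hnode]
      simp [w]
    · simp only [x, Fin.addCases_right]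
      exact hPα a
  funext s
  have h := hnode (Fin.natAdd K s)
  rw [hP] at h
  simpa [w] using h.symm
end

section
/- Let F be a finite field, M, K, T, N positive integers, β_1, …, β_{K+T} ∈ F pairwise distinct, and α_1, …, α_N ∈ F pairwise distinct with {α_1,…,α_N} ∩ {β_1,…,β_K} = ∅. For X ∈ (F^M)^K and keys Z = (Z_1,…,Z_T) ∈ (F^M)^T, let u_{X,Z} : F → F^M be the unique coordinatewise polynomial map of degree at most K+T−1 with u_{X,Z}(β_j) = X_j for j ∈ {1,…,K} and u_{X,Z}(β_{K+t}) = Z_t for t ∈ {1,…,T}. Then for every subset 𝒯 ⊆ {1,…,N} of size T and every fixed X, the map Z ↦ (u_{X,Z}(α_i))_{i∈𝒯} from (F^M)^T to (F^M)^𝒯 is a bijection. Consequently, if Z is uniformly distributed on (F^M)^T, the tuple of coded variables (u_{X,Z}(α_i))_{i∈𝒯} is uniformly distributed on (F^M)^𝒯, identically for every X; i.e., the LCC encoding is T-private. -/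
/-- **T-privacy of the Lagrange encoding.**
The dataset `X ∈ (F^M)^K` is padded by keys `Z ∈ (F^M)^T` and encoded via the Lagrange
interpolant `u_{X,Z}` of degree `≤ K+T−1` through distinct nodes `β_1,…,β_{K+T}`
(`u_{X,Z}(β_j) = X_j`, `u_{X,Z}(β_{K+t}) = Z_t`), worker `i` storing `u_{X,Z}(α_i)`.
For any set `𝒯` of `T` workers and any fixed `X`, the map `Z ↦ (u_{X,Z}(α_i))_{i∈𝒯}` is
a bijection; hence for uniform `Z` the colluders' view is uniform, identically for
every `X`. -/
theorem lcc_privacy (F : Type*) [Field F] [Fintype F] [DecidableEq F]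
    (M K T N : ℕ) (hM : 0 < M) (hK : 0 < K) (hT : 0 < T) (hN : 0 < N)
    (β : Fin (K + T) → F) (hβ : Function.Injective β)
    (α : Fin N → F) (hα : Function.Injective α)
    (hαβ : ∀ (i : Fin N) (j : Fin K), α i ≠ β (Fin.castAdd T j))
    (𝒯 : Finset (Fin N)) (h𝒯 : 𝒯.card = T)
    (X : Fin K → Fin M → F) :
    Function.Bijective (fun (Z : Fin T → Fin M → F) (i : 𝒯) (m : Fin M) =>
      (Lagrange.interpolate Finset.univ β (fun j => Fin.append X Z j m)).eval (α i.1)) ∧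
    PMF.map (fun (Z : Fin T → Fin M → F) (i : 𝒯) (m : Fin M) =>
        (Lagrange.interpolate Finset.univ β (fun j => Fin.append X Z j m)).eval (α i.1))
        (PMF.uniformOfFintype (Fin T → Fin M → F)) =
      PMF.uniformOfFintype (𝒯 → Fin M → F) := by
  have hinj : Function.Injective (fun (Z : Fin T → Fin M → F) (i : 𝒯) (m : Fin M) =>
      (Lagrange.interpolate Finset.univ β (fun j => Fin.append X Z j m)).eval (α i.1)) := by
    intro Z Z' h
    funext t m
    have hP : Lagrange.interpolate Finset.univ β (fun j => Fin.append X Z j m) =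
        Lagrange.interpolate Finset.univ β (fun j => Fin.append X Z' j m) := by
      have hc : (Finset.univ : Finset (Fin K ⊕ 𝒯)).card =
          (Finset.univ : Finset (Fin (K + T))).card := by
        simp [h𝒯]
      refine Polynomial.eq_of_degrees_lt_of_eval_index_eq (Finset.univ : Finset (Fin K ⊕ 𝒯))
        (v := Sum.elim (fun j => β (Fin.castAdd T j)) (fun i => α i.1)) ?_ ?_ ?_ ?_
      · apply Function.Injective.injOn
        refine Function.Injective.sumElim ?_ ?_ ?_
        · exact hβ.comp (Fin.castAdd_injective K T)
        · exact hα.comp Subtype.val_injective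
        · intro j i
          exact (hαβ i.1 j).symm
      · rw [hc]
        exact Lagrange.degree_interpolate_lt _ hβ.injOn
      · rw [hc]
        exact Lagrange.degree_interpolate_lt _ hβ.injOn
      · rintro (j | i) -
        · simp only [Sum.elim_inl]
          rw [Lagrange.eval_interpolate_at_node _ hβ.injOn (Finset.mem_univ _),
            Lagrange.eval_interpolate_at_node _ hβ.injOn (Finset.mem_univ _)]
          simp
        · exact congrFun (congrFun h i) m
    have h2 := congrArg (Polynomial.eval (β (Fin.natAdd K t))) hP
    rw [Lagrange.eval_interpolate_at_node _ hβ.injOn (Finset.mem_univ _),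
      Lagrange.eval_interpolate_at_node _ hβ.injOn (Finset.mem_univ _)] at h2
    simpa using h2
  have hcard : Fintype.card (Fin T → Fin M → F) = Fintype.card (𝒯 → Fin M → F) := by
    simp [h𝒯]
  have hbij := (Fintype.bijective_iff_injective_and_card _).2 ⟨hinj, hcard⟩
  refine ⟨hbij, ?_⟩
  ext b
  obtain ⟨a, rfl⟩ := hbij.2 b
  rw [PMF.map_apply, tsum_eq_single a]
  · rw [if_pos rfl, PMF.uniformOfFintype_apply, PMF.uniformOfFintype_apply, hcard]
  · intro a' ha
    exact if_neg fun h => ha (hinj h).symm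
end

section
/- Let F be a field, M, K, T, S, A, N, d natural numbers with d ≥ 1 and (K+T−1)d + S + 2A + 1 ≤ N. Let p be a multivariate polynomial in M variables over F of total degree at most d, let β_1, …, β_{K+T} ∈ F be pairwise distinct, and α_1, …, α_N ∈ F be pairwise distinct. For X ∈ (F^M)^K and Z ∈ (F^M)^T, let u_{X,Z} : F → F^M be the unique coordinatewise polynomial map of degree at most K+T−1 with u_{X,Z}(β_j) = X_j for j ∈ {1,…,K} and u_{X,Z}(β_{K+t}) = Z_t for t ∈ {1,…,T}. Then for every subset 𝒦 ⊆ {1,…,N} with |𝒦| ≥ N − S, every reported vector ỹ : 𝒦 → F, and any (X, Z) and (X′, Z′) such that |{i ∈ 𝒦 : ỹ_i ≠ p(u_{X,Z}(α_i))}| ≤ A and |{i ∈ 𝒦 : ỹ_i ≠ p(u_{X′,Z′}(α_i))}| ≤ A, one has p(X_j) = p(X′_j) for every j ∈ {1,…,K}. (Hence LCC is simultaneously S-resilient and A-secure whenever (K+T−1)deg f + S + 2A + 1 ≤ N.) -/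
open Polynomial in
theorem lcc_aux {F : Type*} [Field F] {M n d : ℕ} (p : MvPolynomial (Fin M) F)
    (hp : p.totalDegree ≤ d) (u : Fin M → F[X]) (hu : ∀ m, (u m).natDegree ≤ n) :
    (MvPolynomial.aeval u p).natDegree ≤ n * d := by
  rw [mul_comm]
  exact (MvPolynomial.aeval_natDegree_le p hp u hu)

open Polynomial in
theorem lcc_eval {F : Type*} [Field F] {M : ℕ} (p : MvPolynomial (Fin M) F)
    (u : Fin M → F[X]) (x : F) :
    (MvPolynomial.aeval u p).eval x = MvPolynomial.eval (fun m => (u m).eval x) p := by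
  have h := MvPolynomial.map_aeval u (Polynomial.evalRingHom x) p
  rw [Polynomial.coe_evalRingHom] at h
  rw [h]
  have : (Polynomial.evalRingHom x).comp (algebraMap F F[X]) = RingHom.id F := by
    ext a; simp
  rw [this]
  rfl

theorem lcc_natDegree {F : Type*} [Field F] {n : ℕ} (β : Fin n → F)
    (hβ : Function.Injective β) (r : Fin n → F) :
    (Lagrange.interpolate Finset.univ β r).natDegree ≤ n - 1 := by
  have h := Lagrange.degree_interpolate_le (s := Finset.univ) r hβ.injOn
  rw [Finset.card_univ, Fintype.card_fin] at h
  exact Polynomial.natDegree_le_of_degree_le h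


/-- **Simultaneous S-resiliency and A-security of LCC.**
Suppose `(K+T−1)d + S + 2A + 1 ≤ N`, `p` has total degree at most `d`, and `u_{X,Z}` is
the Lagrange interpolant of degree `≤ K+T−1` through the distinct nodes `β` with values
`X` on the first `K` nodes and keys `Z` on the last `T`.  If a reported vector `ỹ`
differs from the true worker results `p(u_{X,Z}(α_i))` in at most `A` positions of a set
`𝒦` of at least `N − S` workers, and likewise for `(X',Z')`, then `p(X_j) = p(X'_j)`
for every `j`. -/
theorem lcc_resilient_and_secure (F : Type*) [Field F] (M K T S A N d : ℕ) (hd : 1 ≤ d)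
    (hN : (K + T - 1) * d + S + 2 * A + 1 ≤ N)
    (p : MvPolynomial (Fin M) F) (hp : p.totalDegree ≤ d)
    (β : Fin (K + T) → F) (hβ : Function.Injective β)
    (α : Fin N → F) (hα : Function.Injective α)
    (𝒦 : Finset (Fin N)) (h𝒦 : N - S ≤ 𝒦.card)
    (ytil : Fin N → F)
    (X X' : Fin K → Fin M → F) (Z Z' : Fin T → Fin M → F)
    (hA : Set.ncard {i : Fin N | i ∈ 𝒦 ∧
      ytil i ≠ MvPolynomial.eval (fun m =>
        (Lagrange.interpolate Finset.univ β (fun j => Fin.append X Z j m)).eval (α i)) p} ≤ A)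
    (hA' : Set.ncard {i : Fin N | i ∈ 𝒦 ∧
      ytil i ≠ MvPolynomial.eval (fun m =>
        (Lagrange.interpolate Finset.univ β (fun j => Fin.append X' Z' j m)).eval (α i)) p} ≤ A) :
    ∀ j : Fin K, MvPolynomial.eval (X j) p = MvPolynomial.eval (X' j) p := by
  classical
  intro j
  set u : Fin M → Polynomial F := fun m =>
    Lagrange.interpolate Finset.univ β (fun j => Fin.append X Z j m) with hu
  set u' : Fin M → Polynomial F := fun m =>
    Lagrange.interpolate Finset.univ β (fun j => Fin.append X' Z' j m) with hu'
  have e1 : MvPolynomial.eval (X j) p = (MvPolynomial.aeval u p).eval (β (Fin.castAdd T j)) := by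
    rw [lcc_eval]
    congr 2
    ext m
    simp only [hu]
    rw [Lagrange.eval_interpolate_at_node _ hβ.injOn (Finset.mem_univ _), Fin.append_left]
  have e2 : MvPolynomial.eval (X' j) p = (MvPolynomial.aeval u' p).eval (β (Fin.castAdd T j)) := by
    rw [lcc_eval]
    congr 2
    ext m
    simp only [hu']
    rw [Lagrange.eval_interpolate_at_node _ hβ.injOn (Finset.mem_univ _), Fin.append_left]
  have d1 := lcc_aux p hp u (fun m => lcc_natDegree β hβ _)
  have d2 := lcc_aux p hp u' (fun m => lcc_natDegree β hβ _)
  have hA1 : (𝒦.filter (fun i => ytil i ≠ (MvPolynomial.aeval u p).eval (α i))).card ≤ A := by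
    rw [← Set.ncard_coe_finset]
    convert hA using 2
    ext i
    simp [lcc_eval, hu]
  have hA2 : (𝒦.filter (fun i => ytil i ≠ (MvPolynomial.aeval u' p).eval (α i))).card ≤ A := by
    rw [← Set.ncard_coe_finset]
    convert hA' using 2
    ext i
    simp [lcc_eval, hu']
  rw [e1, e2]
  generalize MvPolynomial.aeval u p = q at *
  generalize MvPolynomial.aeval u' p = q' at *
  set G := 𝒦 \ (𝒦.filter (fun i => ytil i ≠ q.eval (α i)) ∪
    𝒦.filter (fun i => ytil i ≠ q'.eval (α i))) with hG
  have hc : (K + T - 1) * d < G.card := by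
    have h1 := Finset.le_card_sdiff (𝒦.filter (fun i => ytil i ≠ q.eval (α i)) ∪
      𝒦.filter (fun i => ytil i ≠ q'.eval (α i))) 𝒦
    have h2 := Finset.card_union_le (𝒦.filter (fun i => ytil i ≠ q.eval (α i)))
      (𝒦.filter (fun i => ytil i ≠ q'.eval (α i)))
    rw [← hG] at h1
    omega
  have hqq : q = q' := by
    refine Polynomial.eq_of_degree_sub_lt_of_eval_index_eq G hα.injOn ?_ ?_
    · have h3 := Polynomial.natDegree_sub_le_of_le d1 d2
      rw [max_self] at h3
      refine lt_of_le_of_lt (Polynomial.degree_le_of_natDegree_le h3) ?_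
      exact_mod_cast hc
    · intro i hi
      simp only [hG, Finset.mem_sdiff, Finset.mem_union, Finset.mem_filter] at hi
      grind
  rw [hqq]
end

section
/- Let F be a field, d ≥ 1, and let V_1, …, V_d and U be F-vector spaces. Let f : V_1 × ⋯ × V_d → U be a nonzero multilinear map, and write V = V_1 × ⋯ × V_d with the componentwise scalar action of F. Let K ≥ 1 and N be positive integers, and let G ∈ F^{K×N} be an encoding matrix; for X = (X_1,…,X_K) ∈ V^K define the coded variables X̃_i = Σ_{j=1}^{K} G_{j,i} X_j for i ∈ {1,…,N}. Suppose the scheme has recovery threshold R, i.e., for every subset 𝒦 ⊆ {1,…,N} with |𝒦| = R there exists a function h_𝒦 : U^𝒦 → U^K such that h_𝒦((f(X̃_i))_{i∈𝒦}) = (f(X_1),…,f(X_K)) for all X ∈ V^K. Then R ≥ min{ (K−1)d + 1, N − ⌊N/K⌋ + 1 }. -/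
def RTSpan {F : Type*} [Field F] {K N : ℕ} (G : Matrix (Fin K) (Fin N) F)
    (S : Finset (Fin N)) : Prop :=
  ∀ a : Fin K → F, (∀ i ∈ S, ∑ j, a j * G j i = 0) → a = 0

def RTCov {F : Type*} [Field F] {K N : ℕ} (G : Matrix (Fin K) (Fin N) F)
    (j : Fin K) (d : ℕ) (S : Finset (Fin N)) : Prop :=
  ∃ a : Fin d → Fin K → F, (∀ l, a l j ≠ 0) ∧ ∀ i ∈ S, ∃ l, ∑ k, a l k * G k i = 0

theorem rt_card {F : Type*} [Field F] {K N : ℕ} (G : Matrix (Fin K) (Fin N) F)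
    (S : Finset (Fin N)) (h : RTSpan G S) : K ≤ S.card := by
  let φ : (Fin K → F) →ₗ[F] (S → F) :=
    { toFun := fun a i => ∑ j, a j * G j i.1
      map_add' := by
        intro a b; ext i; simp [add_mul, Finset.sum_add_distrib]
      map_smul' := by
        intro c a; ext i; simp [Finset.mul_sum, mul_assoc] }
  have hφ : Function.Injective φ := by
    rw [injective_iff_map_eq_zero]
    intro a ha
    exact h a fun i hi => congrFun ha ⟨i, hi⟩
  have := LinearMap.finrank_le_finrank_of_injective hφ
  simpa using this

theorem rt_min {F : Type*} [Field F] {K N : ℕ} (G : Matrix (Fin K) (Fin N) F)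
    (T : Finset (Fin N)) (h : RTSpan G T) :
    ∃ B ⊆ T, RTSpan G B ∧ ∀ b ∈ B, ¬ RTSpan G (B.erase b) := by
  induction T using Finset.strongInduction with
  | H T ih =>
    by_cases hb : ∃ b ∈ T, RTSpan G (T.erase b)
    · obtain ⟨b, hbT, hb⟩ := hb
      obtain ⟨B, hB, h1⟩ := ih _ (Finset.erase_ssubset hbT) hb
      exact ⟨B, hB.trans (Finset.erase_subset _ _), h1⟩
    · push Not at hb
      exact ⟨T, subset_rfl, h, hb⟩

theorem rt_erase {F : Type*} [Field F] {K N : ℕ} (G : Matrix (Fin K) (Fin N) F)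
    (B : Finset (Fin N)) (h : RTSpan G B) (hm : ∀ b ∈ B, ¬ RTSpan G (B.erase b)) (j : Fin K) :
    ∃ b ∈ B, ∃ a : Fin K → F, a j ≠ 0 ∧ ∀ i ∈ B.erase b, ∑ k, a k * G k i = 0 := by
  by_contra! hcon
  have h1 : ∀ b : Fin N, ∃ a : Fin K → F, b ∈ B →
      (a ≠ 0 ∧ ∀ i ∈ B.erase b, ∑ k, a k * G k i = 0) := by
    intro b
    by_cases hb : b ∈ B
    · have := hm b hb
      unfold RTSpan at this
      push Not at this
      obtain ⟨a, h1, h2⟩ := this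
      exact ⟨a, fun _ => ⟨h2, h1⟩⟩
    · exact ⟨0, fun h => absurd h hb⟩
  choose a ha using h1
  have haj : ∀ b ∈ B, a b j = 0 := by
    intro b hb
    by_contra hne
    obtain ⟨i, hi, h2⟩ := hcon b hb (a b) hne
    exact h2 ((ha b hb).2 i hi)
  have hab : ∀ b ∈ B, ∑ k, a b k * G k b ≠ 0 := by
    intro b hb h0
    refine (ha b hb).1 (h _ fun i hi => ?_)
    by_cases hib : i = b
    · rw [hib]; exact h0
    · exact (ha b hb).2 i (Finset.mem_erase.2 ⟨hib, hi⟩)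
  let c : Fin N → F := fun b => G j b / ∑ k, a b k * G k b
  let x : Fin K → F := fun k => (if k = j then 1 else 0) - ∑ b ∈ B, c b * a b k
  have hx : x = 0 := by
    refine h x fun i hi => ?_
    have e1 : ∑ k, x k * G k i = G j i - ∑ b ∈ B, c b * ∑ k, a b k * G k i := by
      simp only [x, sub_mul, Finset.sum_sub_distrib, Finset.sum_mul, Finset.mul_sum]
      rw [Finset.sum_comm]
      simp [mul_assoc]
    rw [e1, Finset.sum_eq_single i]
    · simp only [c]
      rw [div_mul_cancel₀ _ (hab i hi), sub_self]
    · intro b hb hbi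
      rw [(ha b hb).2 i (Finset.mem_erase.2 ⟨hbi.symm, hi⟩), mul_zero]
    · exact fun h => absurd hi h
  have hxj : x j = 1 := by
    simp only [x]
    rw [Finset.sum_eq_zero]
    · simp
    · intro b hb; rw [haj b hb, mul_zero]
  rw [hx] at hxj
  simp at hxj

theorem rt_cov_succ {F : Type*} [Field F] {K N : ℕ} (G : Matrix (Fin K) (Fin N) F)
    (j : Fin K) (d : ℕ) (S S' : Finset (Fin N)) (h : RTCov G j d S) (a : Fin K → F)
    (haj : a j ≠ 0) (ha : ∀ i ∈ S', ∑ k, a k * G k i = 0) : RTCov G j (d + 1) (S ∪ S') := by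
  obtain ⟨A, h1, h2⟩ := h
  refine ⟨Fin.cons a A, ?_, ?_⟩
  · intro l
    refine Fin.cases ?_ (fun l => ?_) l
    · simpa using haj
    · simpa using h1 l
  · intro i hi
    rcases Finset.mem_union.1 hi with hi | hi
    · obtain ⟨l, hl⟩ := h2 i hi
      exact ⟨l.succ, by simpa using hl⟩
    · exact ⟨0, by simpa using ha i hi⟩

theorem rt_main {F : Type*} [Field F] {K N : ℕ} (G : Matrix (Fin K) (Fin N) F) (d : ℕ) :
    ∀ T : Finset (Fin N),
    (∀ j, ∃ S ⊆ T, RTCov G j d S ∧ (K - 1) * d ≤ S.card) ∨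
    (∃ j, ∃ S ⊆ T, RTCov G j d S ∧ (T.card - S.card) * K ≤ T.card) := by
  induction d with
  | zero =>
    intro T
    left
    intro j
    exact ⟨∅, by simp, ⟨fun _ => 0, fun l => l.elim0, by simp⟩, by simp⟩
  | succ d ih =>
    intro T
    by_cases hT : RTSpan G T
    · obtain ⟨B, hBT, hB, hmin⟩ := rt_min G T hT
      have hK := rt_card G B hB
      have key : ∀ j, ∀ S ⊆ T \ B, RTCov G j d S → ∃ S' ⊆ T, RTCov G j (d + 1) S' ∧
          S'.card + 1 = S.card + B.card := by
        intro j S hS hc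
        obtain ⟨b, hb, a, haj, ha⟩ := rt_erase G B hB hmin j
        refine ⟨S ∪ B.erase b, ?_, rt_cov_succ G j d S _ hc a haj ha, ?_⟩
        · exact Finset.union_subset (hS.trans Finset.sdiff_subset)
            ((Finset.erase_subset _ _).trans hBT)
        · rw [Finset.card_union_of_disjoint, add_assoc, Finset.card_erase_add_one hb]
          exact (Finset.disjoint_of_subset_left hS Finset.sdiff_disjoint).mono_right
            (Finset.erase_subset _ _)
      have hcT : (T \ B).card + B.card = T.card := Finset.card_sdiff_add_card_eq_card hBT
      rcases ih (T \ B) with h | ⟨j, S, hS, hc, hcard⟩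
      · left
        intro j
        obtain ⟨S, hS, hc, hcard⟩ := h j
        obtain ⟨S', h1, h2, h3⟩ := key j S hS hc
        refine ⟨S', h1, h2, ?_⟩
        rw [mul_add, mul_one]
        have hj := j.pos
        omega
      · right
        obtain ⟨S', h1, h2, h3⟩ := key j S hS hc
        refine ⟨j, S', h1, h2, ?_⟩
        have hle := Finset.card_le_card hS
        have : T.card - S'.card = ((T \ B).card - S.card) + 1 := by omega
        rw [this, add_mul, one_mul]
        omega
    · right
      unfold RTSpan at hT
      push Not at hT
      obtain ⟨a, h1, h2⟩ := hT
      obtain ⟨j, hj⟩ := Function.ne_iff.1 h2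
      exact ⟨j, T, subset_rfl, ⟨fun _ => a, fun _ => hj, fun i hi => ⟨0, h1 i hi⟩⟩, by simp⟩


/-- **Lower bound on the recovery threshold for multilinear functions (Lemma 1,
resiliency part).**  Let `f` be a nonzero multilinear map of degree `d` on
`V = V_1 × ⋯ × V_d`, and let a linear encoding scheme assign worker `i` the coded
variable `X̃_i = Σ_j G_{j,i} • X_j`.  If from every set of `R` workers' results
`(f(X̃_i))` the master can decode `(f(X_1),…,f(X_K))`, then
`R ≥ min{(K−1)d + 1, N − ⌊N/K⌋ + 1}`. -/
theorem recovery_threshold_lower_bound (F : Type*) [Field F] (d K N R : ℕ)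
    (hd : 1 ≤ d) (hK : 1 ≤ K) (hN : 0 < N)
    (V : Fin d → Type*) [∀ i, AddCommMonoid (V i)] [∀ i, Module F (V i)]
    (U : Type*) [AddCommMonoid U] [Module F U]
    (f : MultilinearMap F V U) (hf : f ≠ 0)
    (G : Matrix (Fin K) (Fin N) F)
    (hR : ∀ 𝒦 : Finset (Fin N), 𝒦.card = R →
      ∃ h : (𝒦 → U) → (Fin K → U),
        ∀ X : Fin K → (∀ l, V l),
          h (fun i => f (∑ j : Fin K, G j i.1 • X j)) = fun j => f (X j)) :
    min ((K - 1) * d + 1) (N - N / K + 1) ≤ R := by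
  by_contra hlt
  rw [not_le, lt_min_iff] at hlt
  obtain ⟨hl1, hl2⟩ := hlt
  have hcov : ∃ j, ∃ S : Finset (Fin N), RTCov G j d S ∧ R ≤ S.card := by
    rcases rt_main G d Finset.univ with h | ⟨j, S, -, hc, hcard⟩
    · obtain ⟨S, -, hc, hcard⟩ := h ⟨0, hK⟩
      exact ⟨_, S, hc, by omega⟩
    · refine ⟨j, S, hc, ?_⟩
      rw [Finset.card_univ, Fintype.card_fin] at hcard
      have := (Nat.le_div_iff_mul_le hK).2 hcard
      have := Nat.div_le_self N K
      omega
  obtain ⟨j, S, ⟨a, haj, ha⟩, hRS⟩ := hcov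
  obtain ⟨T, hTS, hTR⟩ := Finset.exists_subset_card_eq hRS
  obtain ⟨h, hh⟩ := hR T hTR
  have hv : ∃ v, f v ≠ 0 := by
    by_contra! hcon
    exact hf (MultilinearMap.ext hcon)
  obtain ⟨v, hv⟩ := hv
  have h1 := hh (fun k l => a l k • v l)
  have h0 := hh (fun _ _ => 0)
  haveI : Nonempty (Fin d) := ⟨⟨0, hd⟩⟩
  have f0 : f (fun _ => 0) = 0 := f.map_zero
  have e0 : (fun i : T => f (∑ k : Fin K, G k i.1 • (fun l => (0 : V l)))) = fun _ => 0 := by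
    funext i
    rw [← f0]
    congr 1
    ext l
    simp [Finset.sum_apply]
  have e1 : (fun i : T => f (∑ k : Fin K, G k i.1 • (fun l => a l k • v l))) = fun _ => 0 := by
    funext i
    obtain ⟨l, hl⟩ := ha i.1 (hTS i.2)
    apply f.map_coord_zero l
    simp only [Finset.sum_apply, Pi.smul_apply, smul_smul]
    rw [← Finset.sum_smul]
    simp only [mul_comm (G _ _)]
    rw [hl, zero_smul]
  rw [e0] at h0
  rw [e1, h0] at h1
  have h2 := congrFun h1 j
  simp only [f0] at h2
  rw [f.map_smul_univ] at h2
  have hne : (∏ l, a l j) ≠ 0 := Finset.prod_ne_zero_iff.2 fun l _ => haj l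
  exact hv ((IsUnit.mk0 _ hne).smul_eq_zero.1 h2.symm)
end

section
/- Let V and U be sets, f : V → U, and N, K, S, A natural numbers. Let g_1, …, g_N : V^K → V be arbitrary deterministic encoding functions, and suppose the scheme is S-resilient and A-secure: for every subset 𝒦 ⊆ {1,…,N} with |𝒦| ≥ N − S there exists a decoder h_𝒦 : U^𝒦 → U^K such that for every X ∈ V^K and every reported vector ỹ : 𝒦 → U with |{i ∈ 𝒦 : ỹ_i ≠ f(g_i(X))}| ≤ A, one has h_𝒦(ỹ) = (f(X_1),…,f(X_K)). Then the scheme can tolerate S + 2A stragglers: for every subset 𝒦′ ⊆ {1,…,N} with |𝒦′| ≥ N − S − 2A and any X, X′ ∈ V^K with f(g_i(X)) = f(g_i(X′)) for all i ∈ 𝒦′, one has f(X_j) = f(X′_j) for every j ∈ {1,…,K}. -/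
/-- **An (S-resilient, A-secure) scheme tolerates S + 2A stragglers** (the coded
computing analogue of the Hamming bound: correcting `A` errors plus `S` erasures implies
correcting `S + 2A` erasures).  If for every set `𝒦` of at least `N − S` workers there is
a decoder returning `(f(X_1),…,f(X_K))` from any reported vector differing from the true
results `f(g_i(X))` in at most `A` positions, then any two datasets whose results agree
on some set of at least `N − S − 2A` workers have equal outputs `f(X_j)`. -/
theorem resilient_secure_implies_more_stragglers (V U : Type*) (f : V → U)
    (N K S A : ℕ)
    (g : Fin N → (Fin K → V) → V)
    (hdec : ∀ 𝒦 : Finset (Fin N), N - S ≤ 𝒦.card →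
      ∃ h : (𝒦 → U) → (Fin K → U),
        ∀ (X : Fin K → V) (ytil : 𝒦 → U),
          Set.ncard {i : 𝒦 | ytil i ≠ f (g i.1 X)} ≤ A →
          h ytil = fun j => f (X j)) :
    ∀ 𝒦' : Finset (Fin N), N - S - 2 * A ≤ 𝒦'.card →
      ∀ X X' : Fin K → V, (∀ i ∈ 𝒦', f (g i X) = f (g i X')) →
        ∀ j : Fin K, f (X j) = f (X' j) := by
  classical
  intro 𝒦' hK X X' hag j
  have hc : (𝒦'ᶜ).card = N - 𝒦'.card := by
    rw [Finset.card_compl, Fintype.card_fin]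
  have hle : 𝒦'.card ≤ N := by simpa using Finset.card_le_univ 𝒦'
  obtain ⟨D, hD, hDc⟩ := Finset.exists_subset_card_eq
    (s := 𝒦'ᶜ) (n := min (2 * A) (N - 𝒦'.card)) (by rw [hc]; exact min_le_right _ _)
  obtain ⟨E, hE, hEc⟩ := Finset.exists_subset_card_eq
    (s := D) (n := min A D.card) (min_le_right _ _)
  have hdisj : Disjoint 𝒦' D :=
    Finset.disjoint_left.2 fun a ha hb => (Finset.mem_compl.1 (hD hb)) ha
  have hcard : (𝒦' ∪ D).card = 𝒦'.card + D.card := Finset.card_union_of_disjoint hdisj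
  have hF : (D \ E).card = D.card - E.card := Finset.card_sdiff_of_subset hE
  obtain ⟨h, hh⟩ := hdec (𝒦' ∪ D) (by omega)
  have key : ∀ (P : Set ((𝒦' ∪ D : Finset (Fin N)))) (T : Finset (Fin N)), T.card ≤ A →
      (∀ i ∈ P, i.1 ∈ T) → P.ncard ≤ A := by
    intro P T hT hP
    rw [← Set.ncard_image_of_injective P Subtype.val_injective]
    refine le_trans (Set.ncard_le_ncard (t := (T : Set (Fin N))) ?_ T.finite_toSet) ?_
    · rintro _ ⟨i, hi, rfl⟩
      exact hP i hi
    · rwa [Set.ncard_coe_finset]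
  have h1 := hh X (fun i => if i.1 ∈ E then f (g i.1 X') else f (g i.1 X))
    (key _ E (by omega) (by
      intro i hi
      by_contra hn
      exact hi (by simp [hn])))
  have h2 := hh X' (fun i => if i.1 ∈ E then f (g i.1 X') else f (g i.1 X))
    (key _ (D \ E) (by omega) (by
      intro i hi
      have hiE : i.1 ∉ E := fun hn => hi (by simp [hn])
      rcases Finset.mem_union.1 i.2 with hk | hd
      · exact absurd (by simp [hiE, hag i.1 hk]) hi
      · exact Finset.mem_sdiff.2 ⟨hd, hiE⟩))
  exact congrFun (h1.symm.trans h2) j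
end

section
/- Let F be a field, d ≥ 1, K ≥ 1, and let W ⊆ F^K be an F-linear subspace of dimension r > 0 such that for every i ∈ {1,…,K} the coordinate functional Γ ↦ Γ_i is not identically zero on W. Consider N workers, where worker i stores a vector (X̃_{i,1}, …, X̃_{i,d}, Γ̃_i) ∈ F^{d+1} and returns the product X̃_{i,1}·⋯·X̃_{i,d}·Γ̃_i. Suppose: (i) for each ℓ ∈ {1,…,d}, the entries (X̃_{i,ℓ})_{i∈[N]} are fixed F-linear combinations of the data entries (X_{j,ℓ})_{j∈[K]} and of independent uniformly random keys, and this encoding is T_X-private with T_X > 0 (for every subset 𝒯 of at most T_X workers, the joint distribution of (X̃_{i,ℓ})_{i∈𝒯} is identical for all values of (X_{j,ℓ})_j); (ii) the entries (Γ̃_i)_{i∈[N]} are fixed F-linear combinations of Γ ∈ W and of independent uniformly random keys, and this encoding is T-private (with no keys used when T = 0); (iii) there is a decoding function that recovers (X_{i,1}·⋯·X_{i,d}·Γ_i)_{i∈[K]} from the N returned products, for all data X ∈ (F^d)^K, all Γ ∈ W, and all key realizations. Then N ≥ (T_X + K − 1)d + T + r. -/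
open Classical in
theorem slb_singleton {F V ι : Type*} [Field F] [AddCommGroup V] [Module F V]
    [FiniteDimensional F V] (c : ι → V) (M : Finset ι) (E : Submodule F V) (t : ℕ)
    (hE : E ≠ ⊥) (hle : E ≤ Submodule.span F (c '' (M : Set ι)))
    (hp : ∀ A : Finset ι, A.card ≤ t → Disjoint (Submodule.span F (c '' (A : Set ι))) E) :
    Module.finrank F E + t ≤ Module.finrank F (Submodule.span F (c '' (M : Set ι))) := by
  obtain ⟨B, hBM, hBs, hBli⟩ : ∃ B ⊆ (M : Set ι), Submodule.span F (c '' B) =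
      Submodule.span F (c '' (M : Set ι)) ∧ LinearIndepOn F c B := by
    obtain ⟨B, hB, hs, hli⟩ := exists_linearIndepOn_extension (K := F) (v := c)
      (s := ∅) (t := (M : Set ι)) (linearIndepOn_empty F c) (Set.empty_subset _)
    refine ⟨B, hB, ?_, hli.2⟩
    apply le_antisymm (Submodule.span_mono (Set.image_mono hB))
    exact Submodule.span_le.2 hli.1
  have hfin : B.Finite := M.finite_toSet.subset hBM
  obtain ⟨B, rfl⟩ := hfin.exists_finset_coe
  by_cases hc : B.card ≤ t
  · have h := hp B hc
    rw [hBs] at h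
    exact absurd (h.eq_bot_of_ge hle) hE
  · push Not at hc
    obtain ⟨A, hAB, hAc⟩ := Finset.exists_subset_card_eq hc.le
    have h := hp A hAc.le
    have hAli : LinearIndepOn F c (A : Set ι) := hBli.mono (by exact_mod_cast hAB)
    have hfr : Module.finrank F (Submodule.span F (c '' (A : Set ι))) = t := by
      have := finrank_span_eq_card hAli
      have h2 : Set.range (fun x : (A : Set ι) => c x) = c '' (A : Set ι) := by
        ext x; simp
      rw [h2] at this
      rw [this, ← hAc]; simp
    have hsum := Submodule.finrank_sup_add_finrank_inf_eq
      (Submodule.span F (c '' (A : Set ι))) E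
    rw [h.eq_bot, finrank_bot, hfr] at hsum
    have hl : Submodule.span F (c '' (A : Set ι)) ⊔ E ≤ Submodule.span F (c '' (M : Set ι)) := by
      apply sup_le _ hle
      apply Submodule.span_mono (Set.image_mono _)
      exact subset_trans (by exact_mod_cast hAB) hBM
    have := Submodule.finrank_mono hl
    omega

/-- exchange: if `x ∈ Z ⊔ ⟨y⟩` and `x ∉ Z` then the spans agree -/
theorem slb_exchange {F U : Type*} [Field F] [AddCommGroup U] [Module F U]
    (Z : Submodule F U) (x y : U) (h : x ∈ Z ⊔ F ∙ y) (hx : x ∉ Z) :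
    Z ⊔ F ∙ x = Z ⊔ F ∙ y := by
  obtain ⟨z, hz, u, hu, rfl⟩ := Submodule.mem_sup.1 h
  obtain ⟨a, rfl⟩ := Submodule.mem_span_singleton.1 hu
  have ha : a ≠ 0 := by
    rintro rfl
    apply hx; simpa using hz
  apply le_antisymm
  · refine sup_le le_sup_left ?_
    rw [Submodule.span_singleton_le_iff_mem]; exact h
  · refine sup_le le_sup_left ?_
    rw [Submodule.span_singleton_le_iff_mem]
    have h1 : (-a⁻¹ • z) + a⁻¹ • (z + a • y) = y := by
      rw [smul_add, smul_smul, inv_mul_cancel₀ ha]; simp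
    have h2 : (-a⁻¹ • z) + a⁻¹ • (z + a • y) ∈ Z ⊔ F ∙ (z + a • y) := Submodule.add_mem _ (Submodule.mem_sup_left (Z.smul_mem _ hz))
      (Submodule.mem_sup_right (Submodule.smul_mem _ _ (Submodule.mem_span_singleton_self _)))
    rwa [h1] at h2

theorem slb_finrank_succ {F U : Type*} [Field F] [AddCommGroup U] [Module F U]
    [FiniteDimensional F U] (Z : Submodule F U) (y : U) (hy : y ∉ Z) :
    Module.finrank F (Z ⊔ F ∙ y : Submodule F U) = Module.finrank F Z + 1 := by
  have hsum := Submodule.finrank_sup_add_finrank_inf_eq Z (F ∙ y)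
  have hy0 : y ≠ 0 := by rintro rfl; exact hy Z.zero_mem
  have hd : Disjoint Z (F ∙ y) := (Submodule.disjoint_span_singleton' hy0).2 hy
  rw [hd.eq_bot, finrank_bot, finrank_span_singleton hy0] at hsum
  omega


/-- The matroidal decodability condition. -/
def SlbWeak {F ι κ Λ U : Type*} [Field F] (V : Λ → Type*) [∀ ℓ, AddCommGroup (V ℓ)]
    [∀ ℓ, Module F (V ℓ)] (c : (ℓ : Λ) → ι → V ℓ) (e : (ℓ : Λ) → κ → V ℓ)
    [AddCommGroup U] [Module F U] (g : ι → U) (w : κ → U) (L : Finset Λ)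
    (M : Finset ι) (J : Finset κ) (Z : Submodule F U) : Prop :=
  ∀ (S : Λ → Set ι) (SU : Set ι), (∀ i ∈ M, i ∈ SU ∨ ∃ ℓ ∈ L, i ∈ S ℓ) →
      ∀ j ∈ J, w j ∈ Z ⊔ Submodule.span F (g '' SU) ∨
        ∃ ℓ ∈ L, e ℓ j ∈ Submodule.span F (c ℓ '' S ℓ)

theorem slb_weak_kill {F ι κ Λ U : Type*} [Field F] (V : Λ → Type*) [∀ ℓ, AddCommGroup (V ℓ)]
    [∀ ℓ, Module F (V ℓ)] (c : (ℓ : Λ) → ι → V ℓ) (e : (ℓ : Λ) → κ → V ℓ)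
    [AddCommGroup U] [Module F U] (g : ι → U) (w : κ → U) (L : Finset Λ)
    (M : Finset ι) (J : Finset κ) (Z : Submodule F U)
    (h : SlbWeak V c e g w L M J Z) (M' : Finset ι) (J' : Finset κ) (hJ : J' ⊆ J)
    (Z' : Submodule F U) (hZ : Z ≤ Z') (hM : ∀ i ∈ M, i ∉ M' → g i ∈ Z') :
    SlbWeak V c e g w L M' J' Z' := by
  intro S SU hcov j hj
  rcases h S (SU ∪ {i | i ∈ M ∧ i ∉ M'}) (by
    intro i hi
    by_cases hi' : i ∈ M'
    · rcases hcov i hi' with h1 | h1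
      · exact Or.inl (Or.inl h1)
      · exact Or.inr h1
    · exact Or.inl (Or.inr ⟨hi, hi'⟩)) j (hJ hj) with h1 | h1
  · left
    refine (?_ : Z ⊔ _ ≤ _) h1
    refine sup_le (hZ.trans le_sup_left) ?_
    rw [Submodule.span_le]
    rintro _ ⟨i, hi | hi, rfl⟩
    · exact Submodule.mem_sup_right (Submodule.subset_span ⟨i, hi, rfl⟩)
    · exact Submodule.mem_sup_left (hM i hi.1 hi.2)
  · exact Or.inr h1

open Classical in
theorem slb_step {F ι κ Λ U : Type*} [Field F] (V : Λ → Type*) [∀ ℓ, AddCommGroup (V ℓ)]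
    [∀ ℓ, Module F (V ℓ)] (c : (ℓ : Λ) → ι → V ℓ) (e : (ℓ : Λ) → κ → V ℓ)
    [AddCommGroup U] [Module F U] [FiniteDimensional F U] (g : ι → U) (w : κ → U) (L : Finset Λ)
    (t n : ℕ) (ht : 1 ≤ t)
    (aux : ∀ (M : Finset ι) (J : Finset κ) (Z : Submodule F U), J.Nonempty →
      (∀ j ∈ J, w j ∉ Z) → SlbWeak V c e g w L M J Z → (J.card + t - 1) * n + 1 ≤ M.card)
    (m : ℕ) : ∀ (M : Finset ι) (J : Finset κ) (Z : Submodule F U), M.card = m → J.Nonempty →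
      (∀ j ∈ J, w j ∉ Z) → SlbWeak V c e g w L M J Z →
      (J.card + t - 1) * n +
        Module.finrank F (Z ⊔ Submodule.span F (g '' (M : Set ι)) : Submodule F U)
        ≤ M.card + Module.finrank F Z := by
  induction m using Nat.strong_induction_on with
  | _ m ih =>
  intro M J Z hm hJ hw hweak
  have haux := aux M J Z hJ hw hweak
  by_cases h0 : ∃ i ∈ M, g i ∈ Z
  · obtain ⟨i, hi, hiZ⟩ := h0
    have hc : (M.erase i).card + 1 = M.card := Finset.card_erase_add_one hi
    have := ih (M.erase i).card (by omega) (M.erase i) J Z rfl hJ hw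
      (slb_weak_kill V c e g w L M J Z hweak _ _ subset_rfl _ le_rfl (by
        intro k hk hk'
        have : k = i := by
          by_contra hne; exact hk' (Finset.mem_erase.2 ⟨hne, hk⟩)
        rw [this]; exact hiZ))
    have hle : Z ⊔ Submodule.span F (g '' (M : Set ι)) ≤
        Z ⊔ Submodule.span F (g '' ((M.erase i : Finset ι) : Set ι)) := by
      refine sup_le le_sup_left ?_
      rw [Submodule.span_le]
      rintro _ ⟨k, hk, rfl⟩
      by_cases hki : k = i
      · rw [hki]; exact Submodule.mem_sup_left hiZ
      · exact Submodule.mem_sup_right (Submodule.subset_span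
          ⟨k, by simpa [hki] using hk, rfl⟩)
    have := Submodule.finrank_mono hle
    omega
  push Not at h0
  set φ : ι → Submodule F U := fun i => Z ⊔ F ∙ g i with hφ
  set ψ : κ → Submodule F U := fun j => Z ⊔ F ∙ w j with hψ
  by_cases hgood : ∃ p ∈ M.image φ, J.filter (fun j => ψ j = p) ≠ J ∧
      (J.filter (fun j => ψ j = p)).card * n < (M.filter (fun i => φ i = p)).card
  · obtain ⟨p, hp, hJp, hlt⟩ := hgood
    obtain ⟨i, hi, rfl⟩ := Finset.mem_image.1 hp
    have hmem : ∀ k, g k ∈ φ k := fun k =>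
      Submodule.mem_sup_right (Submodule.mem_span_singleton_self _)
    have hMc := Finset.card_filter_add_card_filter_not (s := M) (fun k => φ k = φ i)
    have hJc := Finset.card_filter_add_card_filter_not (s := J) (fun k => ψ k = φ i)
    have hJ' : (J.filter (fun j => ¬ ψ j = φ i)).Nonempty := by
      rw [Finset.nonempty_iff_ne_empty]
      intro hem
      apply hJp
      rw [Finset.filter_eq_self]
      intro j hj
      by_contra hne
      exact Finset.notMem_empty j (hem ▸ Finset.mem_filter.2 ⟨hj, hne⟩)
    have := ih (M.filter (fun k => ¬ φ k = φ i)).card (by omega) _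
      (J.filter (fun j => ¬ ψ j = φ i)) (φ i) rfl hJ' (by
        intro j hj hj'
        rw [Finset.mem_filter] at hj
        exact hj.2 (slb_exchange Z _ _ hj' (hw j hj.1)))
      (slb_weak_kill V c e g w L M J Z hweak _ _ (Finset.filter_subset _ _) _ le_sup_left (by
        intro k hk hk'
        have : φ k = φ i := by
          by_contra hne; exact hk' (Finset.mem_filter.2 ⟨hk, hne⟩)
        rw [← this]; exact hmem k))
    have hle : Z ⊔ Submodule.span F (g '' (M : Set ι)) ≤
        φ i ⊔ Submodule.span F
          (g '' ((M.filter (fun k => ¬ φ k = φ i) : Finset ι) : Set ι)) := by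
      refine sup_le (le_sup_left.trans le_sup_left) ?_
      rw [Submodule.span_le]
      rintro _ ⟨k, hk, rfl⟩
      by_cases hki : φ k = φ i
      · exact Submodule.mem_sup_left (hki ▸ hmem k)
      · exact Submodule.mem_sup_right (Submodule.subset_span
          ⟨k, Finset.mem_coe.2 (Finset.mem_filter.2 ⟨hk, hki⟩), rfl⟩)
    have hfr := Submodule.finrank_mono hle
    have hsucc : Module.finrank F (φ i) = _ := slb_finrank_succ Z (g i) (h0 i hi)
    have hJ1 := hJ'.card_pos
    have e1 : J.card + t - 1 = (J.filter (fun j => ψ j = φ i)).card +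
      ((J.filter (fun j => ¬ ψ j = φ i)).card + t - 1) := by omega
    rw [e1, Nat.add_mul]
    omega
  · push Not at hgood
    -- pigeonhole
    have hone : ∀ p ∈ M.image φ, J.filter (fun j => ψ j = p) = J := by
      have hsum : ∑ p ∈ M.image φ, (J.filter (fun j => ψ j = p)).card * n <
          ∑ p ∈ M.image φ, (M.filter (fun i => φ i = p)).card := by
        rw [← Finset.card_eq_sum_card_image, ← Finset.sum_mul]
        have h1 : ∑ p ∈ M.image φ, (J.filter (fun j => ψ j = p)).card ≤ J.card :=
          by
            rw [← Finset.card_biUnion]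
            · exact Finset.card_le_card (by
                intro x hx
                obtain ⟨p, -, hx⟩ := Finset.mem_biUnion.1 hx
                exact (Finset.mem_filter.1 hx).1)
            · intro p _ q _ hpq
              rw [Function.onFun, Finset.disjoint_left]
              intro x hx hx'
              exact hpq ((Finset.mem_filter.1 hx).2.symm.trans (Finset.mem_filter.1 hx').2)
        have h2 := Nat.mul_le_mul_right n h1
        have h3 : J.card * n ≤ (J.card + t - 1) * n := Nat.mul_le_mul_right n (by omega)
        omega
      obtain ⟨p, hp, hlt⟩ := Finset.exists_lt_of_sum_lt hsum
      have hpJ : J.filter (fun j => ψ j = p) = J := by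
        by_contra hne
        exact absurd hlt (not_lt.2 (hgood p hp hne))
      intro q hq
      by_contra hne
      have h1 := hgood q hq hne
      obtain ⟨i, hi, rfl⟩ := Finset.mem_image.1 hq
      have h2 : 0 < (M.filter (fun k => φ k = φ i)).card :=
        Finset.card_pos.2 ⟨i, Finset.mem_filter.2 ⟨hi, rfl⟩⟩
      have h3 : 0 < (J.filter (fun j => ψ j = φ i)).card := by
        by_contra h4
        have : (J.filter (fun j => ψ j = φ i)).card = 0 := by omega
        rw [this] at h1; omega
      obtain ⟨j, hj⟩ := Finset.card_pos.1 h3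
      rw [Finset.mem_filter] at hj
      have hjp := (Finset.filter_eq_self.1 hpJ) j hj.1
      apply hne
      rw [← hj.2, hjp]; exact hpJ
    obtain ⟨j, hj⟩ := hJ
    have hall : ∀ i ∈ M, φ i = ψ j := fun i hi =>
      ((Finset.filter_eq_self.1 (hone _ (Finset.mem_image_of_mem φ hi))) j hj).symm
    have hle : Z ⊔ Submodule.span F (g '' (M : Set ι)) ≤ ψ j := by
      refine sup_le le_sup_left ?_
      rw [Submodule.span_le]
      rintro _ ⟨k, hk, rfl⟩
      rw [← hall k hk]
      exact Submodule.mem_sup_right (Submodule.mem_span_singleton_self _)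
    have hfr := Submodule.finrank_mono hle
    have hsucc : Module.finrank F (ψ j) = _ := slb_finrank_succ Z (w j) (hw j hj)
    omega

open Classical in
theorem slb_core.{u, v, w, x, y} {F : Type u} [Field F] {ι : Type w} {κ : Type x} {Λ : Type y}
    (V : Λ → Type v) [∀ ℓ, AddCommGroup (V ℓ)] [∀ ℓ, Module F (V ℓ)]
    [∀ ℓ, FiniteDimensional F (V ℓ)]
    (c : (ℓ : Λ) → ι → V ℓ) (e : (ℓ : Λ) → κ → V ℓ) (t : ℕ) (ht : 1 ≤ t)
    (he : ∀ ℓ, LinearIndependent F (e ℓ))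
    (hp : ∀ ℓ, ∀ A : Finset ι, A.card ≤ t →
      Disjoint (Submodule.span F (c ℓ '' (A : Set ι))) (Submodule.span F (Set.range (e ℓ))))
    (n : ℕ) : ∀ (L : Finset Λ), L.card = n →
    ∀ (U : Type v) [AddCommGroup U] [Module F U] [FiniteDimensional F U]
    (g : ι → U) (w : κ → U) (M : Finset ι) (J : Finset κ) (Z : Submodule F U), J.Nonempty →
    (∀ j ∈ J, w j ∉ Z) → SlbWeak V c e g w L M J Z →
    (J.card + t - 1) * n + Module.finrank F (Z ⊔ Submodule.span F (g '' (M : Set ι)) : Submodule F U)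
      ≤ M.card + Module.finrank F Z := by
  induction n with
  | zero =>
    intro L hL U _ _ _ g w M J Z hJ hw hweak
    refine slb_step V c e g w L t 0 ht ?_ _ M J Z rfl hJ hw hweak
    intro M J Z hJ hw hweak
    obtain ⟨j, hj⟩ := hJ
    have hL0 : L = ∅ := Finset.card_eq_zero.1 hL
    subst hL0
    by_contra hM
    have hM0 : M = ∅ := by
      rw [← Finset.card_eq_zero]; omega
    subst hM0
    rcases hweak (fun _ => ∅) ∅ (by simp) j hj with h | h
    · exact hw j hj (by simpa using h)
    · simp at h
  | succ n ih =>
    intro L hL U _ _ _ g w M J Z hJ hw hweak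
    refine slb_step V c e g w L t (n + 1) ht ?_ _ M J Z rfl hJ hw hweak
    intro M J Z hJ hw hweak
    obtain ⟨ℓ₀, hℓ₀⟩ : L.Nonempty := Finset.card_pos.1 (by omega)
    have hne : ∀ ℓ j, e ℓ j ≠ 0 := fun ℓ j => (he ℓ).ne_zero j
    have key := ih (L.erase ℓ₀) (by rw [Finset.card_erase_of_mem hℓ₀]; omega)
      (V ℓ₀) (c ℓ₀) (e ℓ₀) M J ⊥ hJ (by intro j _; simpa using hne ℓ₀ j) (by
        intro S SU hcov j hj
        rcases hweak (Function.update S ℓ₀ SU) ∅ (by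
          intro i hi
          right
          rcases hcov i hi with h | ⟨ℓ, hℓ, h⟩
          · exact ⟨ℓ₀, hℓ₀, by simpa using h⟩
          · have := Finset.mem_erase.1 hℓ
            exact ⟨ℓ, this.2, by simpa [Function.update_of_ne this.1] using h⟩) j hj with h | ⟨ℓ, hℓ, h⟩
        · exact absurd (by simpa using h) (hw j hj)
        · by_cases hl : ℓ = ℓ₀
          · subst hl
            left; simpa using h
          · right
            exact ⟨ℓ, Finset.mem_erase.2 ⟨hl, hℓ⟩, by
              simpa [Function.update_of_ne hl] using h⟩)
    have hmem : ∀ j ∈ J, e ℓ₀ j ∈ Submodule.span F (c ℓ₀ '' (M : Set ι)) := by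
      intro j hj
      rcases hweak (Function.update (fun _ => ∅) ℓ₀ (M : Set ι)) ∅ (by
          intro i hi
          exact Or.inr ⟨ℓ₀, hℓ₀, by simpa using hi⟩) j hj with h | ⟨ℓ, hℓ, h⟩
      · exact absurd (by simpa using h) (hw j hj)
      · by_cases hl : ℓ = ℓ₀
        · subst hl; simpa using h
        · rw [Function.update_of_ne hl] at h
          exact absurd (by simpa using h) (hne ℓ j)
    have hE : Module.finrank F (Submodule.span F (e ℓ₀ '' (J : Set κ))) = J.card := by
      have hli : LinearIndepOn F (e ℓ₀) (J : Set κ) := (he ℓ₀).linearIndepOn _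
      have := finrank_span_eq_card hli
      have h2 : Set.range (fun x : (J : Set κ) => e ℓ₀ x) = e ℓ₀ '' (J : Set κ) := by
        ext x; simp
      rw [h2] at this
      rw [this]; simp
    have hsing := slb_singleton (c ℓ₀) M (Submodule.span F (e ℓ₀ '' (J : Set κ))) t (by
        intro hb
        rw [hb, finrank_bot] at hE
        have := hJ.card_pos
        omega) (by
        rw [Submodule.span_le]
        rintro _ ⟨j, hj, rfl⟩
        exact hmem j hj) (fun A hA => (hp ℓ₀ A hA).mono_right
          (Submodule.span_mono (Set.image_subset_range _ _)))
    rw [bot_sup_eq, finrank_bot] at key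
    rw [hE] at hsing
    rw [Nat.mul_add]
    omega

/-- The coded symbol of worker `i`, as a functional of data and keys. -/
def slbEnc {F : Type*} [Field F] {K N v : ℕ} {A : Type*} [AddCommGroup A] [Module F A]
    (π : A →ₗ[F] (Fin K → F)) (C : Matrix (Fin K) (Fin N) F) (D : Matrix (Fin v) (Fin N) F)
    (i : Fin N) : Module.Dual F (A × (Fin v → F)) where
  toFun p := (∑ j : Fin K, C j i * π p.1 j) + ∑ t : Fin v, D t i * p.2 t
  map_add' p q := by
    simp only [Prod.fst_add, Prod.snd_add, map_add, Pi.add_apply, mul_add, Finset.sum_add_distrib]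
    ring
  map_smul' a p := by
    simp only [Prod.smul_fst, Prod.smul_snd, map_smul, Pi.smul_apply, smul_eq_mul,
      RingHom.id_apply, mul_add, Finset.mul_sum]
    congr 1 <;> exact Finset.sum_congr rfl fun _ _ => by ring

/-- The data coordinate `j`, as a functional of data and keys. -/
def slbCoord {F : Type*} [Field F] {K : ℕ} (v : ℕ) {A : Type*} [AddCommGroup A] [Module F A]
    (π : A →ₗ[F] (Fin K → F)) (j : Fin K) : Module.Dual F (A × (Fin v → F)) :=
  LinearMap.proj j ∘ₗ π ∘ₗ LinearMap.fst F A (Fin v → F)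

theorem slb_pmf {F : Type*} [Field F] [Fintype F] {K N v : ℕ} (C : Matrix (Fin K) (Fin N) F)
    (D : Matrix (Fin v) (Fin N) F) (𝒯 : Finset (Fin N)) (x : Fin K → F)
    (h : PMF.map (fun z : Fin v → F => fun i : 𝒯 =>
            (∑ j : Fin K, C j i.1 * x j) + ∑ t : Fin v, D t i.1 * z t)
          (PMF.uniformOfFintype (Fin v → F)) =
        PMF.map (fun z : Fin v → F => fun i : 𝒯 =>
            (∑ j : Fin K, C j i.1 * (0 : Fin K → F) j) + ∑ t : Fin v, D t i.1 * z t)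
          (PMF.uniformOfFintype (Fin v → F))) :
    ∃ z' : Fin v → F, ∀ i ∈ 𝒯, (∑ t : Fin v, D t i * z' t) = ∑ j : Fin K, C j i * x j := by
  have hs' := congrArg PMF.support h
  rw [PMF.support_map, PMF.support_map, PMF.support_uniformOfFintype] at hs'
  obtain ⟨z', -, hz'⟩ := hs'.subset ⟨0, trivial, rfl⟩
  refine ⟨z', fun i hi => ?_⟩
  have := congrFun hz' ⟨i, hi⟩
  simpa using this

theorem slb_priv {F : Type*} [Field F] {K N v : ℕ} {A : Type*} [AddCommGroup A]
    [Module F A] (π : A →ₗ[F] (Fin K → F)) (C : Matrix (Fin K) (Fin N) F)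
    (D : Matrix (Fin v) (Fin N) F) (T : ℕ)
    (h : ∀ 𝒯 : Finset (Fin N), 𝒯.card ≤ T → ∀ x : A, ∃ z' : Fin v → F, ∀ i ∈ 𝒯,
      (∑ t : Fin v, D t i * z' t) = ∑ j : Fin K, C j i * π x j)
    (S : Finset (Fin N)) (hS : S.card ≤ T) :
    Disjoint (Submodule.span F (slbEnc π C D '' (S : Set (Fin N))))
      (Submodule.span F (Set.range (slbCoord v π))) := by
  rw [Submodule.disjoint_def]
  intro u hu1 hu2
  have hz : ∀ z : Fin v → F, u (0, z) = 0 := by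
    intro z
    clear hu1
    induction hu2 using Submodule.span_induction with
    | mem x hx => obtain ⟨j, rfl⟩ := hx; simp [slbCoord]
    | zero => simp
    | add x y _ _ hx hy => simp [hx, hy]
    | smul a x _ hx => simp [hx]
  have hker : ∀ p : A × (Fin v → F), (∀ i ∈ S, slbEnc π C D i p = 0) → u p = 0 := by
    intro p hp
    clear hu2 hz
    induction hu1 using Submodule.span_induction with
    | mem x hx => obtain ⟨j, hj, rfl⟩ := hx; exact hp j hj
    | zero => simp
    | add x y _ _ hx hy => simp [hx, hy]
    | smul a x _ hx => simp [hx]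
  apply LinearMap.ext
  rintro ⟨a, z⟩
  obtain ⟨z', hz'⟩ := h S hS a
  have h1 : u (a, -z') = 0 := by
    apply hker
    intro i hi
    have := hz' i hi
    simp [slbEnc, ← this]
  have h2 : ((a, z) : A × (Fin v → F)) = (a, -z') + (0, z + z') := by
    ext <;> simp
  rw [h2, map_add, h1, hz]; simp

theorem slb_coord_li {F : Type*} [Field F] (K v : ℕ) :
    LinearIndependent F (slbCoord v (LinearMap.id : (Fin K → F) →ₗ[F] (Fin K → F))) := by
  rw [Fintype.linearIndependent_iff]
  intro a ha j
  have := LinearMap.congr_fun ha (Pi.single j 1, 0)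
  simpa [slbCoord, LinearMap.sum_apply, Pi.single_apply] using this

theorem slb_rank {F : Type*} [Field F] {K : ℕ} (W : Submodule F (Fin K → F)) (vG : ℕ) :
    Module.finrank F W ≤ Module.finrank F
      (Submodule.span F (Set.range (slbCoord vG W.subtype))) := by
  rw [← Subspace.dual_finrank_eq (K := F) (V := Submodule.span F (Set.range (slbCoord vG W.subtype)))]
  let ev : W →ₗ[F] Module.Dual F (Submodule.span F (Set.range (slbCoord vG W.subtype))) :=
    (Submodule.span F (Set.range (slbCoord vG W.subtype))).subtype.dualMap ∘ₗ
      Module.Dual.eval F (W × (Fin vG → F)) ∘ₗ LinearMap.inl F W (Fin vG → F)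
  apply LinearMap.finrank_le_finrank_of_injective (f := ev)
  rw [injective_iff_map_eq_zero]
  intro γ hγ
  ext j
  exact LinearMap.congr_fun hγ ⟨slbCoord vG W.subtype j, Submodule.subset_span ⟨j, rfl⟩⟩

theorem slb_witness {F P : Type*} [Field F] [AddCommGroup P] [Module F P]
    [FiniteDimensional F P] (Φ : Submodule F (Module.Dual F P)) (u : Module.Dual F P)
    (hu : u ∉ Φ) : ∃ p : P, (∀ f ∈ Φ, f p = 0) ∧ u p ≠ 0 := by
  by_contra hcon
  push Not at hcon
  apply hu
  rw [← Subspace.dualCoannihilator_dualAnnihilator_eq (W := Φ), Submodule.mem_dualAnnihilator]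
  intro p hp
  exact hcon p ((Submodule.mem_dualCoannihilator p).1 hp)


theorem slb_privX {F : Type*} [Field F] [Fintype F] {K N v : ℕ} (T : ℕ)
    (C : Matrix (Fin K) (Fin N) F) (D : Matrix (Fin v) (Fin N) F)
    (h : ∀ 𝒯 : Finset (Fin N), 𝒯.card ≤ T → ∀ x x' : Fin K → F,
        PMF.map (fun z : Fin v → F => fun i : 𝒯 =>
            (∑ j : Fin K, C j i.1 * x j) + ∑ t : Fin v, D t i.1 * z t)
          (PMF.uniformOfFintype (Fin v → F)) =
        PMF.map (fun z : Fin v → F => fun i : 𝒯 =>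
            (∑ j : Fin K, C j i.1 * x' j) + ∑ t : Fin v, D t i.1 * z t)
          (PMF.uniformOfFintype (Fin v → F)))
    (S : Finset (Fin N)) (hS : S.card ≤ T) :
    Disjoint (Submodule.span F
        (slbEnc (LinearMap.id : (Fin K → F) →ₗ[F] (Fin K → F)) C D '' (S : Set (Fin N))))
      (Submodule.span F (Set.range
        (slbCoord v (LinearMap.id : (Fin K → F) →ₗ[F] (Fin K → F))))) :=
  by
  have := slb_priv (LinearMap.id : (Fin K → F) →ₗ[F] (Fin K → F)) C D T
    (fun 𝒯 h𝒯 x => slb_pmf C D 𝒯 x (h 𝒯 h𝒯 x 0)) S hS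
  exact this

theorem slb_privG {F : Type*} [Field F] [Fintype F] {K N v : ℕ} (T : ℕ)
    (W : Submodule F (Fin K → F))
    (C : Matrix (Fin K) (Fin N) F) (D : Matrix (Fin v) (Fin N) F)
    (h : ∀ 𝒯 : Finset (Fin N), 𝒯.card ≤ T → ∀ x x' : Fin K → F, x ∈ W → x' ∈ W →
        PMF.map (fun z : Fin v → F => fun i : 𝒯 =>
            (∑ j : Fin K, C j i.1 * x j) + ∑ t : Fin v, D t i.1 * z t)
          (PMF.uniformOfFintype (Fin v → F)) =
        PMF.map (fun z : Fin v → F => fun i : 𝒯 =>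
            (∑ j : Fin K, C j i.1 * x' j) + ∑ t : Fin v, D t i.1 * z t)
          (PMF.uniformOfFintype (Fin v → F)))
    (S : Finset (Fin N)) (hS : S.card ≤ T) :
    Disjoint (Submodule.span F (slbEnc W.subtype C D '' (S : Set (Fin N))))
      (Submodule.span F (Set.range (slbCoord v W.subtype))) :=
  slb_priv W.subtype C D T
    (fun 𝒯 h𝒯 x => slb_pmf C D 𝒯 x (h 𝒯 h𝒯 x 0 x.2 W.zero_mem)) S hS

theorem slb_dec {F : Type*} [Field F] {d K N vG : ℕ} {v : Fin d → ℕ}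
    (W : Submodule F (Fin K → F))
    (G : (ℓ : Fin d) → Matrix (Fin K) (Fin N) F)
    (H : (ℓ : Fin d) → Matrix (Fin (v ℓ)) (Fin N) F)
    (C : Matrix (Fin K) (Fin N) F) (D : Matrix (Fin vG) (Fin N) F)
    (hdec : ∃ h : (Fin N → F) → (Fin K → F),
      ∀ (X : Fin K → Fin d → F) (Γ : Fin K → F), Γ ∈ W →
        ∀ (zX : (ℓ : Fin d) → Fin (v ℓ) → F) (zG : Fin vG → F),
          h (fun i =>
              (∏ ℓ : Fin d,
                ((∑ j : Fin K, G ℓ j i * X j ℓ) + ∑ t : Fin (v ℓ), H ℓ t i * zX ℓ t)) *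
              ((∑ j : Fin K, C j i * Γ j) + ∑ t : Fin vG, D t i * zG t)) =
            fun j => (∏ ℓ : Fin d, X j ℓ) * Γ j) :
    SlbWeak (fun ℓ => Module.Dual F ((Fin K → F) × (Fin (v ℓ) → F)))
      (fun ℓ => slbEnc LinearMap.id (G ℓ) (H ℓ)) (fun ℓ => slbCoord (v ℓ) LinearMap.id)
      (slbEnc W.subtype C D) (slbCoord vG W.subtype)
      Finset.univ Finset.univ Finset.univ (⊥ : Submodule F _) := by
  obtain ⟨h, hdec⟩ := hdec
  have h0 : h 0 = 0 := by
    have := hdec 0 0 W.zero_mem 0 0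
    have hz : (0 : Fin N → F) = fun _ => 0 := rfl
    rw [hz]
    funext j
    simpa using congrFun this j
  intro S SU hcov j _
  by_contra hcon
  push Not at hcon
  obtain ⟨hc1, hc2⟩ := hcon
  rw [bot_sup_eq] at hc1
  obtain ⟨⟨γ, zG⟩, hq1, hq2⟩ := slb_witness _ _ hc1
  have hx : ∀ ℓ, ∃ p : (Fin K → F) × (Fin (v ℓ) → F),
      (∀ f ∈ Submodule.span F (slbEnc LinearMap.id (G ℓ) (H ℓ) '' S ℓ), f p = 0) ∧
      slbCoord (v ℓ) LinearMap.id j p ≠ 0 := fun ℓ =>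
    slb_witness _ _ (hc2 ℓ (Finset.mem_univ ℓ))
  choose p hp1 hp2 using hx
  have hd1 := hdec (fun k ℓ => (p ℓ).1 k) γ γ.2 (fun ℓ => (p ℓ).2) zG
  have hzero : (fun i =>
            (∏ ℓ : Fin d,
              ((∑ j : Fin K, G ℓ j i * (p ℓ).1 j) + ∑ t : Fin (v ℓ), H ℓ t i * (p ℓ).2 t)) *
            ((∑ j : Fin K, C j i * (γ : Fin K → F) j) + ∑ t : Fin vG, D t i * zG t)) = 0 := by
    funext i
    rcases hcov i (Finset.mem_univ i) with hi | ⟨ℓ, -, hi⟩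
    · have := hq1 (slbEnc W.subtype C D i) (Submodule.subset_span ⟨i, hi, rfl⟩)
      exact mul_eq_zero_of_right _ this
    · have := hp1 ℓ _ (Submodule.subset_span ⟨i, hi, rfl⟩)
      exact mul_eq_zero_of_left (Finset.prod_eq_zero (Finset.mem_univ ℓ) this) _
  rw [hzero, h0] at hd1
  have hj := (congrFun hd1 j).symm
  rcases mul_eq_zero.1 hj with h1 | h1
  · obtain ⟨ℓ, -, hl⟩ := Finset.prod_eq_zero_iff.1 h1
    exact hp2 ℓ hl
  · exact hq2 h1

theorem slb_final.{u, v} {F : Type u} [Field F] {d K N : ℕ} (T T_X : ℕ) (hK : 1 ≤ K)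
    (hTX : 0 < T_X) (V : Fin d → Type v) [∀ ℓ, AddCommGroup (V ℓ)] [∀ ℓ, Module F (V ℓ)]
    [∀ ℓ, FiniteDimensional F (V ℓ)]
    (c : (ℓ : Fin d) → Fin N → V ℓ) (e : (ℓ : Fin d) → Fin K → V ℓ)
    (he : ∀ ℓ, LinearIndependent F (e ℓ))
    (hp : ∀ ℓ, ∀ A : Finset (Fin N), A.card ≤ T_X →
      Disjoint (Submodule.span F (c ℓ '' (A : Set (Fin N))))
        (Submodule.span F (Set.range (e ℓ))))
    (U : Type v) [AddCommGroup U] [Module F U] [FiniteDimensional F U]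
    (g : Fin N → U) (w : Fin K → U)
    (hpG : ∀ A : Finset (Fin N), A.card ≤ T →
      Disjoint (Submodule.span F (g '' (A : Set (Fin N))))
        (Submodule.span F (Set.range w)))
    (hw0 : ∀ j, w j ≠ 0)
    (hweak : SlbWeak V c e g w Finset.univ Finset.univ Finset.univ (⊥ : Submodule F _))
    (r : ℕ) (hrank : r ≤ Module.finrank F (Submodule.span F (Set.range w))) :
    (T_X + K - 1) * d + T + r ≤ N := by
  have hK0 : (Finset.univ : Finset (Fin K)).Nonempty := ⟨⟨0, hK⟩, Finset.mem_univ _⟩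
  have core := slb_core V
    c e T_X hTX he hp d Finset.univ (by simp) _ g w Finset.univ
    Finset.univ ⊥ hK0 (by intro j _; simpa using hw0 j) hweak
  have hle : Submodule.span F (Set.range w) ≤
      Submodule.span F (g '' ((Finset.univ : Finset (Fin N)) : Set (Fin N))) := by
    rw [Submodule.span_le]
    rintro _ ⟨j, rfl⟩
    rcases hweak (fun _ => ∅) Set.univ (by simp) j (Finset.mem_univ j) with h1 | ⟨ℓ, -, h1⟩
    · simpa using h1
    · exact absurd (by simpa using h1) ((he ℓ).ne_zero j)
  have hsing := slb_singleton g Finset.univ (Submodule.span F (Set.range w)) T (by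
      intro hb
      apply hw0 ⟨0, hK⟩
      have : w ⟨0, hK⟩ ∈ Submodule.span F (Set.range w) := Submodule.subset_span ⟨_, rfl⟩
      rw [hb] at this
      simpa using this) hle hpG
  rw [bot_sup_eq, finrank_bot] at core
  simp only [Finset.card_univ, Fintype.card_fin] at core
  have hcomm : (T_X + K - 1) * d = (K + T_X - 1) * d := by rw [Nat.add_comm T_X K]
  omega

/-- **Lemma 2 (strong worker lower bound for private scalar-product computation).**
Worker `i` stores `(X̃_{i,1},…,X̃_{i,d},Γ̃_i) ∈ F^{d+1}` and returns the product of its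
entries.  Each entry column `(X̃_{i,ℓ})_i` is a fixed linear encoding (with independent
uniform keys) of the data column `(X_{j,ℓ})_j`, and is `T_X`-private with `T_X > 0`;
the column `(Γ̃_i)_i` is a fixed linear encoding (with independent uniform keys) of
`Γ`, ranging over an `r`-dimensional subspace `W ⊆ F^K` on which no coordinate
functional vanishes identically, and is `T`-private (no keys when `T = 0`).  If the
master can decode `(∏_ℓ X_{j,ℓ}) · Γ_j` for all `j` from the `N` products, for all data,
all `Γ ∈ W`, and all key realizations, then `N ≥ (T_X + K − 1)d + T + r`. -/
theorem strong_private_lower_bound (F : Type*) [Field F] [Fintype F]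
    (d K N T T_X r : ℕ) (hd : 1 ≤ d) (hK : 1 ≤ K) (hTX : 0 < T_X)
    (W : Submodule F (Fin K → F)) (hr : Module.finrank F W = r) (hrpos : 0 < r)
    (hW : ∀ i : Fin K, ∃ γ ∈ W, γ i ≠ 0)
    (v : Fin d → ℕ) (vG : ℕ)
    (G : (ℓ : Fin d) → Matrix (Fin K) (Fin N) F)
    (H : (ℓ : Fin d) → Matrix (Fin (v ℓ)) (Fin N) F)
    (C : Matrix (Fin K) (Fin N) F) (D : Matrix (Fin vG) (Fin N) F)
    (hprivX : ∀ ℓ : Fin d, ∀ 𝒯 : Finset (Fin N), 𝒯.card ≤ T_X →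
      ∀ x x' : Fin K → F,
        PMF.map (fun z : Fin (v ℓ) → F => fun i : 𝒯 =>
            (∑ j : Fin K, G ℓ j i.1 * x j) + ∑ t : Fin (v ℓ), H ℓ t i.1 * z t)
          (PMF.uniformOfFintype (Fin (v ℓ) → F)) =
        PMF.map (fun z : Fin (v ℓ) → F => fun i : 𝒯 =>
            (∑ j : Fin K, G ℓ j i.1 * x' j) + ∑ t : Fin (v ℓ), H ℓ t i.1 * z t)
          (PMF.uniformOfFintype (Fin (v ℓ) → F)))
    (hprivG : ∀ 𝒯 : Finset (Fin N), 𝒯.card ≤ T →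
      ∀ Γ Γ' : Fin K → F, Γ ∈ W → Γ' ∈ W →
        PMF.map (fun z : Fin vG → F => fun i : 𝒯 =>
            (∑ j : Fin K, C j i.1 * Γ j) + ∑ t : Fin vG, D t i.1 * z t)
          (PMF.uniformOfFintype (Fin vG → F)) =
        PMF.map (fun z : Fin vG → F => fun i : 𝒯 =>
            (∑ j : Fin K, C j i.1 * Γ' j) + ∑ t : Fin vG, D t i.1 * z t)
          (PMF.uniformOfFintype (Fin vG → F)))
    (hnokeys : T = 0 → vG = 0)
    (hdec : ∃ h : (Fin N → F) → (Fin K → F),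
      ∀ (X : Fin K → Fin d → F) (Γ : Fin K → F), Γ ∈ W →
        ∀ (zX : (ℓ : Fin d) → Fin (v ℓ) → F) (zG : Fin vG → F),
          h (fun i =>
              (∏ ℓ : Fin d,
                ((∑ j : Fin K, G ℓ j i * X j ℓ) + ∑ t : Fin (v ℓ), H ℓ t i * zX ℓ t)) *
              ((∑ j : Fin K, C j i * Γ j) + ∑ t : Fin vG, D t i * zG t)) =
            fun j => (∏ ℓ : Fin d, X j ℓ) * Γ j) :
    (T_X + K - 1) * d + T + r ≤ N := by
  have hw0 : ∀ j, slbCoord vG W.subtype j ≠ 0 := by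
    intro j hj
    obtain ⟨γ, hγ, hne⟩ := hW j
    exact hne (LinearMap.congr_fun hj (⟨γ, hγ⟩, 0))
  exact slb_final T T_X hK hTX (fun ℓ => Module.Dual F ((Fin K → F) × (Fin (v ℓ) → F)))
    (fun ℓ => slbEnc LinearMap.id (G ℓ) (H ℓ)) (fun ℓ => slbCoord (v ℓ) LinearMap.id)
    (fun ℓ => slb_coord_li K (v ℓ)) (fun ℓ => slb_privX T_X (G ℓ) (H ℓ) (hprivX ℓ))
    (Module.Dual F (W × (Fin vG → F))) (slbEnc W.subtype C D) (slbCoord vG W.subtype)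
    (slb_privG T W C D hprivG) hw0 (slb_dec W G H C D hdec) r
    (by rw [← hr]; exact slb_rank W vG)
end

section
/- Let F be a field, d ≥ 1, and let p be a multivariate polynomial in M variables over F of total degree at most d. Define f′ : (F^M)^d → F by f′(Z_1, …, Z_d) = Σ_{S ⊆ {1,…,d}} (−1)^{|S|} p(Σ_{j∈S} Z_j). Then f′ is multilinear: for each argument index j, the map Z_j ↦ f′(Z_1, …, Z_d) (with the other arguments fixed) is F-linear, i.e., additive and homogeneous of degree one. -/
theorem pol_sign_sum {F : Type*} [Field F] {d : ℕ} (k : Fin d) (P : Finset (Fin d) → Prop)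
    [DecidablePred P] (h1 : ∀ S, k ∉ S → (P (insert k S) ↔ P S)) (h2 : ∀ S, k ∈ S → (P (S.erase k) ↔ P S)) :
    ∑ S : Finset (Fin d), (if P S then (-1 : F) ^ S.card else 0) = 0 := by
  refine Finset.sum_involution (fun S _ => if k ∈ S then S.erase k else insert k S) ?_ ?_ ?_ ?_
  · intro S _
    by_cases hk : k ∈ S
    · have hc := Finset.card_erase_add_one hk
      simp only [hk, if_true, h2 S hk, ← hc, pow_succ]
      split_ifs <;> ring
    · simp only [hk, if_false, h1 S hk, Finset.card_insert_of_notMem hk, pow_succ]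
      split_ifs <;> ring
  · intro S _ _ h
    by_cases hk : k ∈ S
    · simp only [hk, if_true] at h
      rw [← h] at hk
      simp at hk
    · simp only [hk, if_false] at h
      rw [← h] at hk
      simp at hk
  · intro S _
    simp
  · intro S _
    by_cases hk : k ∈ S <;> simp [hk]

theorem pol_expand {F : Type*} [Field F] {M d : ℕ} {ι : Type*} [Fintype ι] [DecidableEq ι]
    (σ : ι → Fin M) (Z : Fin d → Fin M → F) :
    ∑ S : Finset (Fin d), (-1 : F) ^ S.card * ∏ i, (∑ k ∈ S, Z k) (σ i) =
      ∑ g : ι → Fin d, (∑ S : Finset (Fin d), if (∀ i, g i ∈ S) then (-1 : F) ^ S.card else 0) *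
        ∏ i, Z (g i) (σ i) := by
  simp_rw [Finset.sum_mul]
  rw [Finset.sum_comm]
  refine Finset.sum_congr rfl fun S _ => ?_
  simp_rw [Finset.sum_apply]
  rw [Finset.prod_univ_sum, Finset.mul_sum]
  simp_rw [ite_mul, zero_mul]
  rw [← Finset.sum_filter]
  refine Finset.sum_congr ?_ fun _ _ => rfl
  ext g
  simp

theorem pol_term {F : Type*} [Field F] {M d : ℕ} {ι : Type*} [Fintype ι] [DecidableEq ι]
    (hc : Fintype.card ι ≤ d) (σ : ι → Fin M) (Z : Fin d → Fin M → F) (j : Fin d) (g : ι → Fin d) :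
    ∃ L : (Fin M → F) →ₗ[F] F, ∀ a : Fin M → F,
      (∑ S : Finset (Fin d), if (∀ i, g i ∈ S) then (-1 : F) ^ S.card else 0) *
        ∏ i, Function.update Z j a (g i) (σ i) = L a := by
  by_cases hg : Function.Surjective g
  · have hinj : Function.Injective g := by
      have hcard := Fintype.card_le_of_surjective g hg
      have : Fintype.card ι = Fintype.card (Fin d) := le_antisymm (by simpa using hc) hcard
      exact ((Fintype.bijective_iff_surjective_and_card g).2 ⟨hg, this⟩).1
    obtain ⟨i0, hi0⟩ := hg j
    refine ⟨((∑ S : Finset (Fin d), if (∀ i, g i ∈ S) then (-1 : F) ^ S.card else 0) *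
      ∏ i ∈ Finset.univ.erase i0, Z (g i) (σ i)) • LinearMap.proj (σ i0), fun a => ?_⟩
    rw [← Finset.mul_prod_erase _ _ (Finset.mem_univ i0)]
    have : ∏ i ∈ Finset.univ.erase i0, Function.update Z j a (g i) (σ i) =
        ∏ i ∈ Finset.univ.erase i0, Z (g i) (σ i) := by
      refine Finset.prod_congr rfl fun i hi => ?_
      have hne : g i ≠ j := fun h => (Finset.ne_of_mem_erase hi) (hinj (h.trans hi0.symm))
      rw [Function.update_of_ne hne]
    rw [this, hi0, Function.update_self]
    simp only [LinearMap.smul_apply, LinearMap.proj_apply, smul_eq_mul]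
    ring
  · have hk : ∃ k, ∀ i, g i ≠ k := by
      simpa [Function.Surjective] using hg
    obtain ⟨k, hk⟩ := hk
    refine ⟨0, fun a => ?_⟩
    rw [pol_sign_sum k (fun S => ∀ i, g i ∈ S)]
    · simp
    · intro S _
      simp [Finset.mem_insert, hk]
    · intro S _
      simp [Finset.mem_erase, hk]

theorem pol_linear {F : Type*} [Field F] {M d : ℕ}
    (p : MvPolynomial (Fin M) F) (hp : p.totalDegree ≤ d) (j : Fin d) (Z : Fin d → Fin M → F) :
    ∃ L : (Fin M → F) →ₗ[F] F, ∀ a : Fin M → F,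
      ∑ S : Finset (Fin d), (-1 : F) ^ S.card *
          MvPolynomial.eval (∑ k ∈ S, Function.update Z j a k) p = L a := by
  have key : ∀ m : Fin M →₀ ℕ, ∃ L : (Fin M → F) →ₗ[F] F, m ∈ p.support → ∀ a : Fin M → F,
      ∑ S : Finset (Fin d), (-1 : F) ^ S.card *
        ∏ i, (∑ k ∈ S, Function.update Z j a k) i ^ m i = L a := by
    intro m
    by_cases hm : m ∈ p.support
    · have hc : Fintype.card (Σ i : Fin M, Fin (m i)) ≤ d := by
        have h := (MvPolynomial.le_totalDegree hm).trans hp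
        rw [Finsupp.sum_fintype _ _ (fun _ => rfl)] at h
        simpa using h
      choose L hL using pol_term (F := F) hc (fun t => t.1) Z j
      refine ⟨∑ g, L g, fun _ a => ?_⟩
      have h := pol_expand (F := F) (fun t : (Σ i : Fin M, Fin (m i)) => t.1) (Function.update Z j a)
      simp_rw [hL] at h
      rw [LinearMap.sum_apply, ← h]
      refine Finset.sum_congr rfl fun S _ => ?_
      rw [Fintype.prod_sigma]
      simp
    · exact ⟨0, fun h => absurd h hm⟩
  choose L hL using key
  refine ⟨∑ m ∈ p.support, p.coeff m • L m, fun a => ?_⟩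
  simp_rw [MvPolynomial.eval_eq', Finset.mul_sum]
  rw [Finset.sum_comm, LinearMap.sum_apply]
  refine Finset.sum_congr rfl fun m hm => ?_
  rw [LinearMap.smul_apply, ← hL m hm a, smul_eq_mul, Finset.mul_sum]
  refine Finset.sum_congr rfl fun S _ => ?_
  ring


/-- **Multilinearity of the polarization of a polynomial.**
For a polynomial `p` of total degree at most `d`, the polarization
`f'(Z_1,…,Z_d) = Σ_{S ⊆ [d]} (−1)^{|S|} p(Σ_{j∈S} Z_j)` is linear (additive and
homogeneous) in each argument `Z_j`. -/
theorem polarization_multilinear (F : Type*) [Field F] (M d : ℕ) (hd : 1 ≤ d)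
    (p : MvPolynomial (Fin M) F) (hp : p.totalDegree ≤ d) :
    ∀ (j : Fin d) (Z : Fin d → Fin M → F) (a b : Fin M → F) (c : F),
      ((∑ S : Finset (Fin d), (-1 : F) ^ S.card *
          MvPolynomial.eval (∑ k ∈ S, Function.update Z j (a + b) k) p) =
        (∑ S : Finset (Fin d), (-1 : F) ^ S.card *
          MvPolynomial.eval (∑ k ∈ S, Function.update Z j a k) p) +
        (∑ S : Finset (Fin d), (-1 : F) ^ S.card *
          MvPolynomial.eval (∑ k ∈ S, Function.update Z j b k) p)) ∧
      ((∑ S : Finset (Fin d), (-1 : F) ^ S.card *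
          MvPolynomial.eval (∑ k ∈ S, Function.update Z j (c • a) k) p) =
        c * ∑ S : Finset (Fin d), (-1 : F) ^ S.card *
          MvPolynomial.eval (∑ k ∈ S, Function.update Z j a k) p) := by
  intro j Z a b c
  obtain ⟨L, hL⟩ := pol_linear p hp j Z
  simp only [hL]
  exact ⟨map_add L a b, by rw [map_smul, smul_eq_mul]⟩
end

section
/- Let F be a field whose characteristic is 0 or strictly greater than d, and let p be a multivariate polynomial in M variables over F of total degree exactly d ≥ 1. Define f′ as the formal polynomial in the d·M variables comprising Z_1, …, Z_d ∈ F^M given by f′(Z_1, …, Z_d) = Σ_{S ⊆ {1,…,d}} (−1)^{|S|} p(Σ_{j∈S} Z_j), where p(Σ_{j∈S} Z_j) is obtained by substituting the coordinates of Σ_{j∈S} Z_j into p. Then f′ is a nonzero polynomial. -/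
open MvPolynomial in
theorem coeff_scale_aux {F : Type*} [Field F] {M : ℕ} (c : F) (p : MvPolynomial (Fin M) F)
    (s : Fin M →₀ ℕ) :
    coeff s (aeval (fun m : Fin M => C c * (X m : MvPolynomial (Fin M) F)) p)
      = c ^ (s.sum fun _ e => e) * coeff s p := by
  classical
  induction p using MvPolynomial.induction_on' with
  | monomial u a =>
    have h : (aeval (fun m : Fin M => C c * (X m : MvPolynomial (Fin M) F))) (monomial u a)
        = C (c ^ (u.sum fun _ e => e)) * monomial u a := by
      rw [aeval_monomial, monomial_eq]
      simp only [Finsupp.prod, mul_pow, Finset.prod_mul_distrib, Finsupp.sum,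
        Finset.prod_pow_eq_pow_sum, C_pow, algebraMap_eq]
      ring
    rw [h, coeff_C_mul, coeff_monomial]
    split_ifs with hu
    · rw [hu]
    · simp
  | add p q hp hq => rw [map_add, coeff_add, coeff_add, hp, hq, mul_add]

theorem sum_scale_aux (F : Type*) [Field F] (d : ℕ) :
    ∑ S : Finset (Fin d), (-1 : F) ^ S.card * (S.card : F) ^ d = (-1) ^ d * (d.factorial : F) := by
  have h1 := congrFun (fwdDiff_iter_eq_factorial (R := F) (n := d)) 0
  rw [fwdDiff_iter_eq_sum_shift] at h1
  have h2 := Finset.sum_powerset_apply_card (x := (Finset.univ : Finset (Fin d))) (fun k => (-1 : F) ^ k * (k : F) ^ d)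
  rw [Finset.powerset_univ, Finset.card_univ, Fintype.card_fin] at h2
  rw [h2]
  simp only [Pi.natCast_apply] at h1
  rw [← h1, Finset.mul_sum]
  refine Finset.sum_congr rfl fun k hk => ?_
  have hk' : k ≤ d := by simpa [Nat.lt_succ_iff] using hk
  obtain ⟨e, rfl⟩ := Nat.exists_eq_add_of_le hk'
  have he : (-1 : F) ^ e * (-1) ^ e = 1 := by rw [← mul_pow]; simp
  simp only [Nat.add_sub_cancel_left, zero_add, nsmul_eq_mul, mul_one, zsmul_eq_mul]
  push_cast
  rw [pow_add (-1 : F) k e]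
  linear_combination (-(-1 : F) ^ k * ((k + e).choose k : F) * (k : F) ^ (k + e)) * he


/-- **Nonvanishing of the polarization (Lemma 3).**
If the characteristic of `F` is `0` or greater than `d`, and `p` has total degree exactly
`d ≥ 1`, then the polarization `f'(Z_1,…,Z_d) = Σ_{S ⊆ [d]} (−1)^{|S|} p(Σ_{j∈S} Z_j)`,
viewed as a formal polynomial in the `d·M` variables `(j, m) ↦ Z_{j,m}`, is nonzero. -/
theorem polarization_nonzero (F : Type*) [Field F] (M d : ℕ) (hd : 1 ≤ d)
    (hchar : ringChar F = 0 ∨ d < ringChar F)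
    (p : MvPolynomial (Fin M) F) (hp : p.totalDegree = d) :
    (∑ S : Finset (Fin d),
        (-1 : F) ^ S.card •
          MvPolynomial.aeval (fun m : Fin M => ∑ j ∈ S, MvPolynomial.X (j, m)) p :
      MvPolynomial (Fin d × Fin M) F) ≠ 0 := by
  classical
  intro h
  have hp0 : p ≠ 0 := by
    rintro rfl
    simp at hp
    omega
  obtain ⟨s, hs, hsd⟩ := Finset.exists_mem_eq_sup p.support
    (MvPolynomial.support_nonempty.2 hp0) (fun s => s.sum fun _ e => e)
  have hsd' : (s.sum fun _ e => e) = d := by rw [← hp]; exact hsd.symm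
  have h1 := congrArg (MvPolynomial.coeff s) (congrArg
    (MvPolynomial.aeval (fun jm : Fin d × Fin M => (MvPolynomial.X jm.2 : MvPolynomial (Fin M) F))) h)
  have key : ∀ S : Finset (Fin d),
      MvPolynomial.aeval (fun jm : Fin d × Fin M => (MvPolynomial.X jm.2 : MvPolynomial (Fin M) F))
        (MvPolynomial.aeval (fun m : Fin M => ∑ j ∈ S,
          (MvPolynomial.X (j, m) : MvPolynomial (Fin d × Fin M) F)) p)
      = MvPolynomial.aeval (fun m : Fin M => MvPolynomial.C (S.card : F) *
          (MvPolynomial.X m : MvPolynomial (Fin M) F)) p := by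
    intro S
    rw [← AlgHom.comp_apply, MvPolynomial.comp_aeval]
    congr 2
    funext m
    simp
  simp only [map_sum, map_smul, key, MvPolynomial.coeff_sum, MvPolynomial.coeff_smul,
    coeff_scale_aux, hsd', smul_eq_mul, map_zero, MvPolynomial.coeff_zero, ← mul_assoc] at h1
  rw [← Finset.sum_mul, sum_scale_aux] at h1
  have hf : (d.factorial : F) ≠ 0 := by
    intro h0
    have hdvd := (ringChar.spec F _).1 h0
    rcases hchar with hc | hc
    · rw [hc, zero_dvd_iff] at hdvd
      exact d.factorial_ne_zero hdvd
    · rcases CharP.char_is_prime_or_zero F (ringChar F) with hpr | hz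
      · exact absurd (hpr.dvd_factorial.1 hdvd) (by omega)
      · omega
  exact mul_ne_zero (mul_ne_zero (pow_ne_zero _ (by simp)) hf)
    (MvPolynomial.mem_support_iff.1 hs) h1
end

section
/- Let n, r, m, d be positive integers with 1 ≤ r ≤ n and n dividing m. For each i ∈ {1,…,n} let E_i : ℝ^{m×d} → ℝ^{c_i} be a linear map with c_i ≤ r·m·d/n (each worker stores an r/n fraction of the data in linearly coded form). Suppose 𝒩 ⊆ {1,…,n} is a subset of workers such that there exist functions φ_i (computing worker i's message from its stored data E_i(X) and the weight vector w) and a decoder h with h((φ_i(E_i(X), w))_{i∈𝒩}) = XᵀXw for all X ∈ ℝ^{m×d} and all w ∈ ℝ^d. Then |𝒩| ≥ ⌈n/r⌉. Consequently, the optimal recovery threshold R* for distributed linear regression satisfies R* ≥ ⌈n/r⌉, so the LCC threshold R_LCC = 2⌈n/r⌉ − 1 is within a factor of 2 of optimal. -/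
/-- **Lower bound on the recovery threshold for distributed linear regression.**
Each worker `i` stores a linearly coded fraction `E_i(X) ∈ ℝ^{c_i}` of the feature
matrix `X ∈ ℝ^{m×d}` with `c_i ≤ r·m·d/n` (stated as `c_i · n ≤ r·m·d`), computes an
arbitrary message `φ_i(E_i(X), w)` from its stored data and the weight vector `w`, and a
decoder `h` recovers `XᵀXw` from the messages of the workers in `𝒩` for all `X` and `w`.
Then `|𝒩| ≥ ⌈n/r⌉` (written `(n + r − 1)/r`); hence the optimal recovery threshold
satisfies `R* ≥ ⌈n/r⌉` and LCC's `2⌈n/r⌉ − 1` is within a factor `2` of optimal. -/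
theorem linear_regression_recovery_lower_bound (n r m d : ℕ)
    (hr1 : 1 ≤ r) (hrn : r ≤ n) (hm : 0 < m) (hd : 0 < d) (hnm : n ∣ m)
    (c : Fin n → ℕ) (hc : ∀ i, c i * n ≤ r * m * d)
    (E : (i : Fin n) → Matrix (Fin m) (Fin d) ℝ →ₗ[ℝ] (Fin (c i) → ℝ))
    (𝒩 : Finset (Fin n))
    (Wt : Fin n → Type*)
    (φ : (i : Fin n) → (Fin (c i) → ℝ) → (Fin d → ℝ) → Wt i)
    (h : ((i : 𝒩) → Wt i.1) → (Fin d → ℝ))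
    (hcorrect : ∀ (X : Matrix (Fin m) (Fin d) ℝ) (w : Fin d → ℝ),
      h (fun i => φ i.1 (E i.1 X) w) = (X.transpose * X).mulVec w) :
    (n + r - 1) / r ≤ 𝒩.card := by
  have hinj : Function.Injective
      (LinearMap.pi (fun i : 𝒩 => E i.1)) := by
    rw [← LinearMap.ker_eq_bot, LinearMap.ker_eq_bot']
    intro X hX
    have hE : ∀ i : 𝒩, E i.1 X = E i.1 0 := fun i => by
      have := congrFun hX i
      simpa using this
    have hz : X.transpose * X = 0 := by
      apply Matrix.mulVec_injective
      funext w
      rw [← hcorrect X w]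
      simp only [hE]
      rw [hcorrect 0 w]
      simp
    rw [← Matrix.conjTranspose_eq_transpose_of_trivial] at hz
    exact Matrix.conjTranspose_mul_self_eq_zero.mp hz
  have hle := LinearMap.finrank_le_finrank_of_injective hinj
  rw [Module.finrank_matrix, Module.finrank_pi_fintype] at hle
  simp only [Fintype.card_fin, Module.finrank_self, mul_one, Module.finrank_fin_fun] at hle
  have h1 : (m * d) * n ≤ (m * d) * (𝒩.card * r) := by
    calc (m * d) * n ≤ (∑ i : 𝒩, c i.1) * n := Nat.mul_le_mul_right _ hle
      _ = ∑ i : 𝒩, c i.1 * n := Finset.sum_mul _ _ _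
      _ ≤ ∑ _i : 𝒩, r * m * d := Finset.sum_le_sum fun i _ => hc i.1
      _ = (m * d) * (𝒩.card * r) := by
        simp only [Finset.sum_const, Finset.card_univ, Fintype.card_coe, smul_eq_mul]
        ring
  have h2 : n ≤ 𝒩.card * r := Nat.le_of_mul_le_mul_left h1 (Nat.mul_pos hm hd)
  apply Nat.le_of_lt_succ
  rw [Nat.div_lt_iff_lt_mul (by omega), Nat.succ_mul]
  omega
end

section
/- Let V and U be sets, f : V → U any function, and N, K, B, S, A natural numbers with B ≥ 1 and S + 2A ≤ B − 1. Let γ : {1,…,N} → {1,…,K} be an assignment of workers to data blocks such that |γ^{-1}(j)| ≥ B for every j ∈ {1,…,K}, and let worker i compute f(X_{γ(i)}). Then for every subset 𝒦 ⊆ {1,…,N} with |𝒦| ≥ N − S, every reported vector ỹ : 𝒦 → U, and any two datasets X, X′ ∈ V^K such that |{i ∈ 𝒦 : ỹ_i ≠ f(X_{γ(i)})}| ≤ A and |{i ∈ 𝒦 : ỹ_i ≠ f(X′_{γ(i)})}| ≤ A, one has f(X_j) = f(X′_j) for every j ∈ {1,…,K}. (Hence the uncoded repetition scheme, which replicates every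 X_i on between ⌊N/K⌋ and ⌈N/K⌉ workers, tolerates S stragglers and A adversaries whenever S + 2A ≤ ⌊N/K⌋ − 1.) -/
/-- **Straggler and adversary tolerance of the uncoded repetition scheme.**
If every data block `j` is assigned to at least `B` workers (worker `i` computes
`f(X_{γ(i)})`) and `S + 2A ≤ B − 1`, then for any set `𝒦` of at least `N − S` workers
and any reported vector `ỹ` differing from the true results of `X` in at most `A`
positions of `𝒦` and likewise for `X'`, all outputs agree: `f(X_j) = f(X'_j)`. -/
theorem repetition_tolerates_stragglers_adversaries (V U : Type*) (f : V → U)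
    (N K B S A : ℕ) (hB : 1 ≤ B) (hSA : S + 2 * A ≤ B - 1)
    (γ : Fin N → Fin K)
    (hγ : ∀ j : Fin K, B ≤ (Finset.univ.filter (fun i => γ i = j)).card) :
    ∀ 𝒦 : Finset (Fin N), N - S ≤ 𝒦.card →
      ∀ ytil : Fin N → U, ∀ X X' : Fin K → V,
        Set.ncard {i : Fin N | i ∈ 𝒦 ∧ ytil i ≠ f (X (γ i))} ≤ A →
        Set.ncard {i : Fin N | i ∈ 𝒦 ∧ ytil i ≠ f (X' (γ i))} ≤ A →
        ∀ j : Fin K, f (X j) = f (X' j) := by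
  classical
  intro 𝒦 h𝒦 y X X' h1 h2 j
  by_contra hne
  have e1 : {i : Fin N | i ∈ 𝒦 ∧ y i ≠ f (X (γ i))}
      = ((𝒦.filter (fun i => y i ≠ f (X (γ i))) : Finset (Fin N)) : Set (Fin N)) := by
    ext i; simp
  have e2 : {i : Fin N | i ∈ 𝒦 ∧ y i ≠ f (X' (γ i))}
      = ((𝒦.filter (fun i => y i ≠ f (X' (γ i))) : Finset (Fin N)) : Set (Fin N)) := by
    ext i; simp
  rw [e1, Set.ncard_coe_finset] at h1
  rw [e2, Set.ncard_coe_finset] at h2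
  have hsub : Finset.univ.filter (fun i => γ i = j) ⊆
      𝒦ᶜ ∪ (𝒦.filter (fun i => y i ≠ f (X (γ i))) ∪ 𝒦.filter (fun i => y i ≠ f (X' (γ i)))) := by
    intro i hi
    have hi' : γ i = j := by simpa using hi
    simp only [Finset.mem_union, Finset.mem_compl, Finset.mem_filter, hi']
    by_cases hk : i ∈ 𝒦
    · by_cases hy : y i = f (X j)
      · exact Or.inr (Or.inr ⟨hk, fun h => hne (hy.symm.trans h)⟩)
      · exact Or.inr (Or.inl ⟨hk, hy⟩)
    · exact Or.inl hk
  have hc := Finset.card_le_card hsub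
  have hu1 := Finset.card_union_le 𝒦ᶜ
    (𝒦.filter (fun i => y i ≠ f (X (γ i))) ∪ 𝒦.filter (fun i => y i ≠ f (X' (γ i))))
  have hu2 := Finset.card_union_le
    (𝒦.filter (fun i => y i ≠ f (X (γ i)))) (𝒦.filter (fun i => y i ≠ f (X' (γ i))))
  have hcc : 𝒦ᶜ.card = N - 𝒦.card := by rw [Finset.card_compl, Fintype.card_fin]
  have hj := hγ j
  omega
end
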